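/- arXiv:2305.09354 — 7 statements merged into one kernel-verified Lean document; each statement's English description precedes it below -/
import Mathlib

section
/- Let τ₁, τ₂ ≥ 0 be real numbers with τ₁ + τ₂ > 0 and let γ be a real number with 0 < |γ| < 1. Then every complex number s satisfying e^{τ₁ s} + γ e^{−τ₂ s} = 0 has real part Re(s) = log|γ| / (τ₁ + τ₂); in particular Re(s) < 0. -/
theorem norm_eq_exp_re_sub_re_of_exp_add_mul_exp_eq_zero {c z w : ℂ}
    (h : Complex.exp z + c * Complex.exp w = 0) : ‖c‖ = Real.exp (z.re - w.re) := by
  have hc : -c = Complex.exp (z - w) := by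
    rw [Complex.exp_sub, eq_div_iff (Complex.exp_ne_zero w), neg_mul]
    exact (eq_neg_of_add_eq_zero_left h).symm
  rw [← norm_neg, hc, Complex.norm_exp, Complex.sub_re]

theorem norm_eq_exp_add_mul_re_of_exp_add_mul_exp_neg_eq_zero {τ₁ τ₂ : ℝ} {γ s : ℂ}
    (hs : Complex.exp ((τ₁ : ℂ) * s) + γ * Complex.exp (-(τ₂ : ℂ) * s) = 0) :
    ‖γ‖ = Real.exp ((τ₁ + τ₂) * s.re) := by
  rw [norm_eq_exp_re_sub_re_of_exp_add_mul_exp_eq_zero hs, neg_mul, Complex.neg_re,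
    Complex.re_ofReal_mul, Complex.re_ofReal_mul, sub_neg_eq_add, add_mul]

theorem re_eq_log_norm_div_of_exp_add_mul_exp_neg_eq_zero {τ₁ τ₂ : ℝ} {γ s : ℂ}
    (hsum : τ₁ + τ₂ ≠ 0)
    (hs : Complex.exp ((τ₁ : ℂ) * s) + γ * Complex.exp (-(τ₂ : ℂ) * s) = 0) :
    s.re = Real.log ‖γ‖ / (τ₁ + τ₂) := by
  rw [norm_eq_exp_add_mul_re_of_exp_add_mul_exp_neg_eq_zero hs, Real.log_exp,
    mul_div_cancel_left₀ _ hsum]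

theorem stmt_0_general {τ₁ τ₂ : ℝ} {γ s : ℂ} (hsum : 0 < τ₁ + τ₂) (hγ : ‖γ‖ < 1)
    (hs : Complex.exp ((τ₁ : ℂ) * s) + γ * Complex.exp (-(τ₂ : ℂ) * s) = 0) :
    s.re = Real.log ‖γ‖ / (τ₁ + τ₂) ∧ s.re < 0 := by
  refine ⟨re_eq_log_norm_div_of_exp_add_mul_exp_neg_eq_zero hsum.ne' hs, ?_⟩
  have hmul : (τ₁ + τ₂) * s.re < 0 := by
    rwa [norm_eq_exp_add_mul_re_of_exp_add_mul_exp_neg_eq_zero hs, Real.exp_lt_one_iff] at hγ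
  exact (pos_iff_neg_of_mul_neg hmul).mp hsum

/-- Every root of the first factor `e^{τ₁ s} + γ e^{-τ₂ s}` of the
closed-loop characteristic equation has real part `log |γ| / (τ₁ + τ₂) < 0`. -/
theorem stmt_0 (τ₁ τ₂ γ : ℝ) (hτ₁ : 0 ≤ τ₁) (hτ₂ : 0 ≤ τ₂) (hsum : 0 < τ₁ + τ₂)
    (hγ0 : 0 < |γ|) (hγ1 : |γ| < 1) (s : ℂ)
    (hs : Complex.exp ((τ₁ : ℂ) * s) + (γ : ℂ) * Complex.exp (-(τ₂ : ℂ) * s) = 0) :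
    s.re = Real.log |γ| / (τ₁ + τ₂) ∧ s.re < 0 := by
  rw [← Real.norm_eq_abs, ← Complex.norm_real] at hγ1 ⊢
  exact stmt_0_general hsum hγ1 hs
end

section
/- Let τ₁, τ₂ ≥ 0 with τ₁ + τ₂ > 0, let γ be real with 0 < |γ| < 1, and let κ₀, …, κ_{n−1} be real coefficients such that the polynomial p(s) = sⁿ + Σ_{i=0}^{n−1} κᵢ sⁱ is Hurwitz, i.e., every complex root of p has negative real part. Then every complex root of the characteristic function 𝔞_cl(s) = (e^{τ₁ s} + γ e^{−τ₂ s}) · p(s) has negative real part. -/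
open Complex in
theorem norm_mul_exp_lt_norm_exp {a b : ℝ} {γ s : ℂ} (hab : b ≤ a) (hγ : ‖γ‖ < 1)
    (hs : 0 ≤ s.re) : ‖γ * exp (b * s)‖ < ‖exp (a * s)‖ := by
  calc ‖γ * exp (b * s)‖ = ‖γ‖ * Real.exp (b * s.re) := by
        rw [norm_mul, norm_exp, re_ofReal_mul]
    _ < Real.exp (b * s.re) := mul_lt_of_lt_one_left (Real.exp_pos _) hγ
    _ ≤ Real.exp (a * s.re) := by gcongr
    _ = ‖exp (a * s)‖ := by rw [norm_exp, re_ofReal_mul]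

open Complex in
theorem re_neg_of_exp_add_mul_exp_eq_zero {a b : ℝ} {γ s : ℂ} (hab : b ≤ a) (hγ : ‖γ‖ < 1)
    (hroot : exp (a * s) + γ * exp (b * s) = 0) : s.re < 0 := by
  by_contra! hs
  have hnorm : ‖exp (a * s)‖ = ‖γ * exp (b * s)‖ := by
    rw [eq_neg_of_add_eq_zero_left hroot, norm_neg]
  exact (norm_mul_exp_lt_norm_exp hab hγ hs).ne' hnorm

theorem stmt_1_general {τ₁ τ₂ : ℝ} {γ : ℂ} {p : ℂ → ℂ} (hτ : 0 ≤ τ₁ + τ₂) (hγ : ‖γ‖ < 1)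
    (hp : ∀ s, p s = 0 → s.re < 0) {s : ℂ}
    (hs : (Complex.exp (τ₁ * s) + γ * Complex.exp (-τ₂ * s)) * p s = 0) : s.re < 0 := by
  rcases mul_eq_zero.mp hs with hdelay | hfactor
  · rw [← Complex.ofReal_neg] at hdelay
    exact re_neg_of_exp_add_mul_exp_eq_zero (neg_le_iff_add_nonneg.mpr hτ) hγ hdelay
  · exact hp s hfactor

/-- Every complex root of the closed-loop characteristic function
`𝔞_cl(s) = (e^{τ₁ s} + γ e^{-τ₂ s}) (sⁿ + Σ κᵢ sⁱ)` has negative real part,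
provided `0 < |γ| < 1` and the polynomial factor is Hurwitz. -/
theorem stmt_1 (n : ℕ) (τ₁ τ₂ γ : ℝ) (κ : Fin n → ℝ)
    (hτ₁ : 0 ≤ τ₁) (hτ₂ : 0 ≤ τ₂) (hsum : 0 < τ₁ + τ₂)
    (hγ0 : 0 < |γ|) (hγ1 : |γ| < 1)
    (hHurwitz : ∀ s : ℂ, s ^ n + ∑ i : Fin n, (κ i : ℂ) * s ^ (i : ℕ) = 0 → s.re < 0)
    (s : ℂ)
    (hs : (Complex.exp ((τ₁ : ℂ) * s) + (γ : ℂ) * Complex.exp (-(τ₂ : ℂ) * s)) *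
      (s ^ n + ∑ i : Fin n, (κ i : ℂ) * s ^ (i : ℕ)) = 0) :
    s.re < 0 :=
  stmt_1_general (p := fun s ↦ s ^ n + ∑ i : Fin n, (κ i : ℂ) * s ^ (i : ℕ)) hsum.le
    (by rwa [Complex.norm_real, Real.norm_eq_abs]) hHurwitz hs
end

section
/- Let T > 0, let c be a real number with |c| < 1, let t₀ ∈ ℝ, let α > 0 and C ≥ 0, and let f, g : ℝ → ℝ satisfy f(t) = c · f(t − T) + g(t) for all t ≥ t₀, with |f(t)| ≤ M for all t ∈ [t₀ − T, t₀] and |g(t)| ≤ C · e^{−α (t − t₀)} for all t ≥ t₀. Then there exist constants C' > 0 and β > 0 such that |f(t)| ≤ C' · e^{−β (t − t₀)} for all t ≥ t₀. -/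
/-!
Write `a = |c|` and choose `0 < β ≤ α` so small that `a e^{βT} < 1`. If `|f (t - T)|` is at most
`K e^{-β(t - T - t₀)}`, the recursion gives `|f t| ≤ (a e^{βT} K + C) e^{-β(t - t₀)}`, which is at
most `K e^{-β(t - t₀)}` as soon as `K` is large. So such a bound, once it holds on a window of
length `T`, propagates forever. Only the inequality `|f t| ≤ a |f (t - T)| + |g t|` enters.
-/

open Filter Set Topology

theorem forall_of_forall_Ico_of_sub {G : Type*} [AddCommGroup G] [LinearOrder G]
    [IsOrderedAddMonoid G] [Archimedean G] {T t₀ : G} {P : G → Prop} (hT : 0 < T)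
    (init : ∀ t ∈ Ico (t₀ - T) t₀, P t) (step : ∀ t, t₀ ≤ t → P (t - T) → P t) :
    ∀ t, t₀ - T ≤ t → P t := by
  have windows (n : ℕ) : ∀ t, t₀ - T ≤ t → t < t₀ + n • T → P t := by
    induction n with
    | zero => exact fun t h_lower h_upper ↦ init t ⟨h_lower, by simpa using h_upper⟩
    | succ n ih =>
      intro t h_lower h_upper
      rcases lt_or_ge t t₀ with h_lt | h_ge
      · exact init t ⟨h_lower, h_lt⟩
      · refine step t h_ge (ih (t - T) (sub_le_sub_right h_ge T) ?_)
        rwa [sub_lt_iff_lt_add, add_assoc, ← succ_nsmul]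
  intro t ht
  obtain ⟨n, hn⟩ := exists_lt_nsmul hT (t - t₀)
  exact windows n t ht (sub_lt_iff_lt_add'.mp hn)

theorem exists_pos_le_mul_exp_lt_one {a α : ℝ} (ha : a < 1) (hα : 0 < α) (T : ℝ) :
    ∃ β, 0 < β ∧ β ≤ α ∧ a * Real.exp (β * T) < 1 := by
  have h_cont : Continuous fun β : ℝ ↦ a * Real.exp (β * T) := by fun_prop
  have h_small : ∀ᶠ β in 𝓝[>] (0 : ℝ), a * Real.exp (β * T) < 1 :=
    nhdsWithin_le_nhds (h_cont.continuousAt.eventually_lt_const (by simpa using ha))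
  obtain ⟨β, hβ, ⟨hβ_pos, hβ_le⟩⟩ := (h_small.and (Ioc_mem_nhdsGT hα)).exists
  exact ⟨β, hβ_pos, hβ_le, hβ⟩

theorem eventually_mul_add_le_self {𝕜 : Type*} [Field 𝕜] [LinearOrder 𝕜] [IsStrictOrderedRing 𝕜]
    {q : 𝕜} (hq : q < 1) (C : 𝕜) : ∀ᶠ K in atTop, q * K + C ≤ K := by
  filter_upwards [eventually_ge_atTop (C / (1 - q))] with K hK
  rw [div_le_iff₀ (sub_pos.mpr hq)] at hK
  linarith

theorem le_mul_exp_of_delay_inequality {T a t₀ β C K : ℝ} {u : ℝ → ℝ} (hT : 0 < T) (ha : 0 ≤ a)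
    (hu : ∀ t, t₀ ≤ t → u t ≤ a * u (t - T) + C * Real.exp (-β * (t - t₀)))
    (h_init : ∀ t ∈ Ico (t₀ - T) t₀, u t ≤ K * Real.exp (-β * (t - t₀)))
    (hK : a * Real.exp (β * T) * K + C ≤ K) :
    ∀ t, t₀ - T ≤ t → u t ≤ K * Real.exp (-β * (t - t₀)) := by
  refine forall_of_forall_Ico_of_sub hT h_init fun t ht h_prev ↦ ?_
  have h_shift : Real.exp (-β * (t - T - t₀)) =
      Real.exp (β * T) * Real.exp (-β * (t - t₀)) := by
    rw [← Real.exp_add]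
    ring_nf
  calc
    u t ≤ a * u (t - T) + C * Real.exp (-β * (t - t₀)) := hu t ht
    _ ≤ a * (K * Real.exp (-β * (t - T - t₀))) + C * Real.exp (-β * (t - t₀)) := by gcongr
    _ = (a * Real.exp (β * T) * K + C) * Real.exp (-β * (t - t₀)) := by rw [h_shift]; ring
    _ ≤ K * Real.exp (-β * (t - t₀)) := by gcongr

theorem stmt_3_general {T a t₀ α C M : ℝ} {u : ℝ → ℝ} (hT : 0 < T) (ha : 0 ≤ a) (ha_lt : a < 1)
    (hα : 0 < α) (hC : 0 ≤ C)
    (hu : ∀ t, t₀ ≤ t → u t ≤ a * u (t - T) + C * Real.exp (-α * (t - t₀)))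
    (hM : ∀ t ∈ Ico (t₀ - T) t₀, u t ≤ M) :
    ∃ C' > 0, ∃ β > 0, ∀ t, t₀ ≤ t → u t ≤ C' * Real.exp (-β * (t - t₀)) := by
  obtain ⟨β, hβ, hβα, hq⟩ := exists_pos_le_mul_exp_lt_one ha_lt hα T
  obtain ⟨K, hK, hK_pos, hMK⟩ := ((eventually_mul_add_le_self hq C).and
    ((eventually_gt_atTop 0).and (eventually_ge_atTop M))).exists
  have hu_slow : ∀ t, t₀ ≤ t → u t ≤ a * u (t - T) + C * Real.exp (-β * (t - t₀)) := by
    intro t ht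
    refine (hu t ht).trans ?_
    gcongr
  have h_init : ∀ t ∈ Ico (t₀ - T) t₀, u t ≤ K * Real.exp (-β * (t - t₀)) := by
    intro t ht
    have h_exp : 1 ≤ Real.exp (-β * (t - t₀)) :=
      Real.one_le_exp (mul_nonneg_of_nonpos_of_nonpos (by linarith) (by linarith [ht.2]))
    exact (hM t ht).trans (hMK.trans (le_mul_of_one_le_right hK_pos.le h_exp))
  refine ⟨K, hK_pos, β, hβ, fun t ht ↦ ?_⟩
  exact le_mul_exp_of_delay_inequality hT ha hu_slow h_init hK t (by linarith)

/-- Exponential decay for the inhomogeneous delay recursion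
`f(t) = c f(t-T) + g(t)` with `|c| < 1` and exponentially decaying forcing `g`. -/
theorem stmt_3 (T c t₀ α C M : ℝ) (f g : ℝ → ℝ) (hT : 0 < T) (hc : |c| < 1)
    (hα : 0 < α) (hC : 0 ≤ C)
    (hf : ∀ t, t₀ ≤ t → f t = c * f (t - T) + g t)
    (hM : ∀ t ∈ Set.Icc (t₀ - T) t₀, |f t| ≤ M)
    (hg : ∀ t, t₀ ≤ t → |g t| ≤ C * Real.exp (-α * (t - t₀))) :
    ∃ C' > 0, ∃ β > 0, ∀ t, t₀ ≤ t → |f t| ≤ C' * Real.exp (-β * (t - t₀)) := by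
  refine stmt_3_general (u := fun t ↦ |f t|) hT (abs_nonneg c) hc hα hC (fun t ht ↦ ?_)
    fun t ht ↦ hM t (Ico_subset_Icc_self ht)
  grw [hf t ht, abs_add_le, abs_mul, hg t ht]
end

section
/- Let F be a real n×n matrix and b ∈ ℝⁿ such that the Kalman controllability matrix M_c = [b, Fb, …, F^{n−1}b] is invertible. Then for every monic real polynomial p of degree n there exists a vector k ∈ ℝⁿ such that the characteristic polynomial of F + b kᵀ equals p. In particular, there exists k ∈ ℝⁿ such that every complex eigenvalue of F + b kᵀ has negative real part. -/
open Matrix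

/-!
Ackermann's formula. Let `n = m + 1` and let `c` be the last row of the inverse of the
controllability matrix, so that `c F ^ j b` is `0` for `j < m` and `1` for `j = m`. Writing
`G = F + b kᵀ`, the feedback first enters `c G ^ j` at `j = m + 1`, so `c p(G) = c p(F) + kᵀ` for
every monic `p` of degree `m + 1`, and `kᵀ = -c p(F)` gives `c p(G) = 0`. The characteristic
polynomial of `G` also annihilates `c`, by Cayley–Hamilton. Finally, at most one monic polynomial
of degree `m + 1` can do so: the product of `c q(G)` with a suitable `G ^ l b` is the leading
coefficient of `q` whenever `q` has degree at most `m`. The choice `p = (X + 1) ^ n` places every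
eigenvalue at `-1`.
-/

section

open Polynomial

variable {ι R : Type*} [Fintype ι] [DecidableEq ι] [CommRing R]

/-- The Kalman controllability matrix `[b, F b, …, F ^ (N - 1) b]`. The number `N` of columns is
left free; the classical controllability condition concerns the square case. -/
def controllabilityMatrix (F : Matrix ι ι R) (b : ι → R) (N : ℕ) : Matrix ι (Fin N) R :=
  Matrix.of fun i j => (F ^ (j : ℕ) *ᵥ b) i

/-- The single-input single-output system `dx/dt = F x + b u`, `y = c x` has relative degree
`m + 1` with high-frequency gain `1`: its Markov parameters `c F ^ j b` vanish for `j < m`, and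
the one for `j = m` is `1`. The index is shifted by one because a relative degree is positive. -/
structure HasUnitRelativeDegree (F : Matrix ι ι R) (b c : ι → R) (m : ℕ) : Prop where
  markov_eq_zero : ∀ j < m, c ⬝ᵥ F ^ j *ᵥ b = 0
  markov_eq_one : c ⬝ᵥ F ^ m *ᵥ b = 1

theorem hasUnitRelativeDegree_of_mul_controllabilityMatrix_eq_one {m : ℕ} {F : Matrix ι ι R}
    {b : ι → R} {L : Matrix (Fin (m + 1)) ι R}
    (hL : L * controllabilityMatrix F b (m + 1) = 1) :
    HasUnitRelativeDegree F b (L (Fin.last m)) m := by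
  have markov (j : Fin (m + 1)) :
      L (Fin.last m) ⬝ᵥ F ^ (j : ℕ) *ᵥ b = (1 : Matrix _ _ R) (Fin.last m) j :=
    congrFun₂ hL (Fin.last m) j
  refine ⟨fun j hj => ?_, ?_⟩
  · rw [markov ⟨j, by omega⟩, one_apply_ne (Fin.ne_of_gt hj)]
  · rw [← one_apply_eq (Fin.last m), ← markov, Fin.val_last]

namespace HasUnitRelativeDegree

variable {F : Matrix ι ι R} {b c : ι → R} {m : ℕ} {p q : R[X]}

theorem dotProduct_aeval_mulVec (h : HasUnitRelativeDegree F b c m) (hq : q.natDegree ≤ m) :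
    c ⬝ᵥ aeval F q *ᵥ b = q.coeff m := by
  have lower_terms : ∀ j ∈ Finset.range m, c ⬝ᵥ (q.coeff j • F ^ j) *ᵥ b = 0 := fun j hj => by
    rw [smul_mulVec, dotProduct_smul, h.markov_eq_zero j (Finset.mem_range.mp hj), smul_zero]
  rw [aeval_eq_sum_range' (Nat.lt_succ_of_le hq), sum_mulVec, dotProduct_sum,
    Finset.sum_range_succ, Finset.sum_eq_zero lower_terms, zero_add, smul_mulVec,
    dotProduct_smul, h.markov_eq_one, smul_eq_mul, mul_one]

theorem eq_zero_of_vecMul_aeval_eq_zero (h : HasUnitRelativeDegree F b c m)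
    (hq : q.natDegree ≤ m) (hann : c ᵥ* aeval F q = 0) : q = 0 := by
  -- Shifting `q` up to degree `m` makes its leading coefficient visible to `c` and `b`.
  obtain ⟨l, rfl⟩ := Nat.exists_eq_add_of_le hq
  have hdeg : (q * X ^ l).natDegree ≤ q.natDegree + l :=
    natDegree_mul_le_of_le le_rfl (natDegree_X_pow_le l)
  have hcoeff : (q * X ^ l).coeff (q.natDegree + l) = q.leadingCoeff :=
    coeff_mul_X_pow q l q.natDegree
  rw [← leadingCoeff_eq_zero, ← hcoeff, ← h.dotProduct_aeval_mulVec hdeg, map_mul,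
    ← mulVec_mulVec, dotProduct_mulVec, hann, zero_dotProduct]

theorem eq_of_vecMul_aeval_eq_zero (h : HasUnitRelativeDegree F b c m)
    (hp : p.IsMonicOfDegree (m + 1)) (hq : q.IsMonicOfDegree (m + 1))
    (hpann : c ᵥ* aeval F p = 0) (hqann : c ᵥ* aeval F q = 0) : p = q := by
  have hdeg : (p - q).natDegree ≤ m := Nat.le_of_lt_succ (hp.natDegree_sub_lt m.succ_ne_zero hq)
  refine sub_eq_zero.mp (h.eq_zero_of_vecMul_aeval_eq_zero hdeg ?_)
  rw [map_sub, vecMul_sub, hpann, hqann, sub_zero]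

theorem vecMul_pow_add_vecMulVec (h : HasUnitRelativeDegree F b c m) (k : ι → R) {j : ℕ}
    (hj : j ≤ m) : c ᵥ* (F + vecMulVec b k) ^ j = c ᵥ* F ^ j := by
  induction j with
  | zero => simp only [pow_zero]
  | succ j ih =>
    rw [pow_succ, ← vecMul_vecMul, ih (by omega), vecMul_add, vecMul_vecMulVec,
      ← dotProduct_mulVec, h.markov_eq_zero j hj, zero_smul, add_zero, vecMul_vecMul, ← pow_succ]

theorem vecMul_pow_succ_add_vecMulVec (h : HasUnitRelativeDegree F b c m) (k : ι → R) :
    c ᵥ* (F + vecMulVec b k) ^ (m + 1) = c ᵥ* F ^ (m + 1) + k := by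
  rw [pow_succ, ← vecMul_vecMul, h.vecMul_pow_add_vecMulVec k le_rfl, vecMul_add,
    vecMul_vecMulVec, ← dotProduct_mulVec, h.markov_eq_one, one_smul, vecMul_vecMul, ← pow_succ]

theorem add_vecMulVec (h : HasUnitRelativeDegree F b c m) (k : ι → R) :
    HasUnitRelativeDegree (F + vecMulVec b k) b c m where
  markov_eq_zero j hj := by
    rw [dotProduct_mulVec, h.vecMul_pow_add_vecMulVec k hj.le, ← dotProduct_mulVec,
      h.markov_eq_zero j hj]
  markov_eq_one := by
    rw [dotProduct_mulVec, h.vecMul_pow_add_vecMulVec k le_rfl, ← dotProduct_mulVec,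
      h.markov_eq_one]

theorem vecMul_aeval_add_vecMulVec (h : HasUnitRelativeDegree F b c m) (k : ι → R)
    (hp : p.natDegree ≤ m + 1) :
    c ᵥ* aeval (F + vecMulVec b k) p = c ᵥ* aeval F p + p.coeff (m + 1) • k := by
  have lower_terms : ∀ j ∈ Finset.range (m + 1),
      c ᵥ* (p.coeff j • (F + vecMulVec b k) ^ j) = c ᵥ* (p.coeff j • F ^ j) := fun j hj => by
    rw [vecMul_smul, vecMul_smul,
      h.vecMul_pow_add_vecMulVec k (Nat.le_of_lt_succ (Finset.mem_range.mp hj))]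
  simp only [aeval_eq_sum_range' (Nat.lt_succ_of_le hp), vecMul_sum]
  rw [Finset.sum_range_succ _ (m + 1), Finset.sum_range_succ _ (m + 1),
    Finset.sum_congr rfl lower_terms, vecMul_smul, vecMul_smul,
    h.vecMul_pow_succ_add_vecMulVec, smul_add, add_assoc]

theorem charpoly_add_vecMulVec_neg_vecMul_aeval (h : HasUnitRelativeDegree F b c m)
    (hcard : Fintype.card ι = m + 1) (hp : p.IsMonicOfDegree (m + 1)) :
    (F + vecMulVec b (-(c ᵥ* aeval F p))).charpoly = p := by
  nontriviality R
  set k := -(c ᵥ* aeval F p) with hk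
  have hann : c ᵥ* aeval (F + vecMulVec b k) p = 0 := by
    have hcoeff : p.coeff (m + 1) = 1 := hp.natDegree_eq ▸ hp.monic.coeff_natDegree
    rw [h.vecMul_aeval_add_vecMulVec k hp.natDegree_eq.le, hcoeff, one_smul, hk, add_neg_cancel]
  have hcayley : c ᵥ* aeval (F + vecMulVec b k) (F + vecMulVec b k).charpoly = 0 := by
    rw [aeval_self_charpoly, vecMul_zero]
  have hcharpoly : (F + vecMulVec b k).charpoly.IsMonicOfDegree (m + 1) :=
    ⟨(charpoly_natDegree_eq_dim _).trans hcard, charpoly_monic _⟩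
  exact (h.add_vecMulVec k).eq_of_vecMul_aeval_eq_zero hcharpoly hp hcayley hann

end HasUnitRelativeDegree

theorem exists_charpoly_add_vecMulVec_eq {n : ℕ} {F : Matrix (Fin n) (Fin n) R} {b : Fin n → R}
    (hctrb : IsUnit (controllabilityMatrix F b n)) {p : R[X]} (hp : p.IsMonicOfDegree n) :
    ∃ k : Fin n → R, (F + vecMulVec b k).charpoly = p := by
  cases n with
  | zero => exact ⟨0, by rw [charpoly_isEmpty, isMonicOfDegree_zero_iff.mp hp]⟩
  | succ m =>
    obtain ⟨L, hL⟩ := hctrb.exists_left_inv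
    have hrow := hasUnitRelativeDegree_of_mul_controllabilityMatrix_eq_one hL
    exact ⟨_, hrow.charpoly_add_vecMulVec_neg_vecMul_aeval (Fintype.card_fin _) hp⟩

theorem stmt_6_general [Algebra R ℂ] {n : ℕ} {F : Matrix (Fin n) (Fin n) R} {b : Fin n → R}
    (hctrb : IsUnit (controllabilityMatrix F b n)) :
    (∀ p : R[X], p.Monic → p.natDegree = n →
      ∃ k : Fin n → R, (F + vecMulVec b k).charpoly = p) ∧
    (∃ k : Fin n → R, ∀ μ : ℂ,
      ((F + vecMulVec b k).charpoly.map (algebraMap R ℂ)).IsRoot μ → μ.re < 0) := by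
  have : Nontrivial R := (algebraMap R ℂ).domain_nontrivial
  refine ⟨fun p hp hdeg => exists_charpoly_add_vecMulVec_eq hctrb ⟨hdeg, hp⟩, ?_⟩
  have hmonic : ((X + C 1 : R[X]) ^ n).IsMonicOfDegree n := by
    simpa only [one_mul] using (isMonicOfDegree_X_add_one (1 : R)).pow n
  obtain ⟨k, hk⟩ := exists_charpoly_add_vecMulVec_eq hctrb hmonic
  refine ⟨k, fun μ hμ => ?_⟩
  have hpow : (μ + 1) ^ n = 0 := by simpa [hk] using hμ
  have hneg : μ = -1 := eq_neg_of_add_eq_zero_left (eq_zero_of_pow_eq_zero hpow)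
  simp [hneg]

end

/-- Pole placement for a controllable pair `(F, b)`: every monic
polynomial of degree `n` can be assigned as characteristic polynomial of
`F + b kᵀ`; in particular `F + b kᵀ` can be made Hurwitz. -/
theorem stmt_6 (n : ℕ) (F : Matrix (Fin n) (Fin n) ℝ) (b : Fin n → ℝ)
    (hctrb : IsUnit (Matrix.of fun i j : Fin n => (F ^ (j : ℕ)).mulVec b i)) :
    (∀ p : Polynomial ℝ, p.Monic → p.natDegree = n →
      ∃ k : Fin n → ℝ, (F + Matrix.vecMulVec b k).charpoly = p) ∧
    (∃ k : Fin n → ℝ, ∀ μ : ℂ,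
      (((F + Matrix.vecMulVec b k).charpoly).map (algebraMap ℝ ℂ)).IsRoot μ →
        μ.re < 0) :=
  stmt_6_general hctrb
end

section
/- Let λ₁, λ₂ : [0,1] → ℝ be continuously differentiable with λ₁, λ₂ > 0, set Λ(z) = diag(λ₁(z), −λ₂(z)), let Ã : [0,1] → ℝ^{2×2} be continuous with zero diagonal entries, let q₀ ≠ 0 be real, let c ∈ ℝⁿ, and let K : 𝒯 → ℝ^{2×2} be continuously differentiable on the triangle 𝒯 = {(z,ζ) : 0 ≤ ζ ≤ z ≤ 1} satisfying the kernel equations Λ(z) ∂_z K(z,ζ) + ∂_ζ(K(z,ζ) Λ(ζ)) = K(z,ζ) Ã(ζ) on 𝒯 together with the boundary conditions K₁₁(z,0) = (q₀ λ₂(0)/λ₁(0)) K₁₂(z,0), K₁₂(z,z) = −Ã₁₂(z)/(λ₁(z)+λ₂(z)), K₂₁(z,z) = Ã₂₁(z)/(λ₁(z)+λ₂(z)), and K₂₂(z,0) = (λ₁(0)/(q₀ λ₂(0))) K₂₁(z,0). Suppose x̃ : [0,1] × ℝ → ℝ² is continuously differentiable and ξ : ℝ → ℝⁿ is continuous, with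 ∂_t x̃(z,t) = Λ(z) ∂_z x̃(z,t) + Ã(z) x̃(z,t) on [0,1] × ℝ and x̃₂(0,t) = q₀ x̃₁(0,t) + cᵀ ξ(t) for all t. Then the function x̄(z,t) = x̃(z,t) − ∫₀^z K(z,ζ) x̃(ζ,t) dζ satisfies ∂_t x̄(z,t) = Λ(z) ∂_z x̄(z,t) + K(z,0) Λ(0) e₂ cᵀ ξ(t) for all (z,t) ∈ [0,1] × ℝ. -/
open Set Matrix

/-- The transport-velocity matrix `Λ(z) = diag(λ₁(z), -λ₂(z))`. -/
noncomputable def LamMat (lam1 lam2 : ℝ → ℝ) (z : ℝ) : Matrix (Fin 2) (Fin 2) ℝ :=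
  !![lam1 z, 0; 0, -lam2 z]

/-- The Volterra integral transformation
`x̄(z,t) = x̃(z,t) - ∫₀^z K(z,ζ) x̃(ζ,t) dζ`. -/
noncomputable def volterraSub (K : ℝ → ℝ → Matrix (Fin 2) (Fin 2) ℝ)
    (x : ℝ → ℝ → Fin 2 → ℝ) (z t : ℝ) : Fin 2 → ℝ :=
  x z t - ∫ ζ in (0:ℝ)..z, (K z ζ).mulVec (x ζ t)

/-!
Integrating the derivative of the integrand and exchanging the order of integration over the
triangle gives the Leibniz rule `x̄_z = x_z - (K(z,z) x + ∫₀ᶻ K_z x)`, while differentiating in `t`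
under the integral sign gives `x̄_t = Λ x_z + A x - ∫₀ᶻ K (Λ x_z + A x)`. By the kernel equation the
last integrand is `∂_ζ (K Λ x) + Λ(z) K_z x`, so that
`x̄_t = Λ x̄_z + (A + Λ K(z,z) - K(z,z) Λ) x(z,t) + K(z,0) Λ(0) x(0,t)`.
The commutator is anti-diagonal and the conditions on `ζ = z` make it cancel `A`; the conditions on
`ζ = 0` say that `K(z,0) Λ(0)` annihilates `(1, q₀)`, so only the inhomogeneity of the boundary
condition of `x` survives in the last term.
-/

/-- The closed triangle `a ≤ s ≤ z ≤ b`, as a set of pairs `(z, s)`: the domain of a Volterra kernel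
on `[a, b]`. -/
def triangle (a b : ℝ) : Set (ℝ × ℝ) :=
  {p | a ≤ p.2 ∧ p.2 ≤ p.1 ∧ p.1 ≤ b}

theorem isCompact_triangle (a b : ℝ) : IsCompact (triangle a b) := by
  refine (isCompact_Icc (a := a) (b := b)).prod isCompact_Icc |>.of_isClosed_subset ?_ fun p hp =>
    ⟨⟨hp.1.trans hp.2.1, hp.2.2⟩, ⟨hp.1, hp.2.1.trans hp.2.2⟩⟩
  exact (isClosed_le continuous_const continuous_snd).inter
    ((isClosed_le continuous_snd continuous_fst).inter
      (isClosed_le continuous_fst continuous_const))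

section Leibniz

open MeasureTheory

variable {E : Type*} [NormedAddCommGroup E] [NormedSpace ℝ E] {a b : ℝ}

theorem integral_indicator_Icc_of_subset {c d : ℝ} (hca : a ≤ c) (hcd : c ≤ d) (hdb : d ≤ b)
    (f : ℝ → E) : ∫ x in a..b, (Icc c d).indicator f x = ∫ x in c..d, f x := by
  rw [intervalIntegral.integral_of_le (hca.trans (hcd.trans hdb)),
    intervalIntegral.integral_of_le hcd, ← integral_Icc_eq_integral_Ioc,
    ← integral_Icc_eq_integral_Ioc, setIntegral_indicator measurableSet_Icc,
    inter_eq_right.2 (Icc_subset_Icc hca hdb)]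

theorem integral_integral_swap_triangle {f : ℝ → ℝ → E} (hab : a ≤ b)
    (hf : IntegrableOn f.uncurry (triangle a b)) :
    ∫ s in a..b, ∫ z in s..b, f z s = ∫ z in a..b, ∫ s in a..z, f z s := by
  let g : ℝ → ℝ → E := fun z s => (triangle a b).indicator f.uncurry (z, s)
  have hg : IntegrableOn g.uncurry (uIoc a b ×ˢ uIoc a b) :=
    (hf.integrable_indicator (isCompact_triangle a b).measurableSet).integrableOn
  have column : ∀ s ∈ uIcc a b, ∫ z in a..b, g z s = ∫ z in s..b, f z s := fun s hs => by
    rw [uIcc_of_le hab] at hs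
    rw [← integral_indicator_Icc_of_subset hs.1 hs.2 le_rfl]
    congr 1 with z
    simp [g, indicator, triangle, hs.1]
  have row : ∀ z ∈ uIcc a b, ∫ s in a..b, g z s = ∫ s in a..z, f z s := fun z hz => by
    rw [uIcc_of_le hab] at hz
    rw [← integral_indicator_Icc_of_subset le_rfl hz.1 hz.2]
    congr 1 with s
    simp [g, indicator, triangle, hz.2]
  rw [← intervalIntegral.integral_congr column, ← intervalIntegral.integral_congr row]
  exact (intervalIntegral_intervalIntegral_swap hg).symm

theorem continuousOn_integral_triangle {f : ℝ → ℝ → E}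
    (hf : ContinuousOn f.uncurry (triangle a b)) :
    ContinuousOn (fun z => ∫ s in a..z, f z s) (Icc a b) := by
  -- The retraction `(z, s) ↦ (z', min (max a s) z')`, `z' = max a (min z b)`, onto the triangle
  -- turns the integrand into a continuous function on the plane.
  rcases lt_or_ge b a with hba | hab
  · simp [Icc_eq_empty_of_lt hba]
  let clamp : ℝ → ℝ := fun z => max a (min z b)
  let retract : ℝ × ℝ → ℝ × ℝ := fun p => (clamp p.1, min (max a p.2) (clamp p.1))
  have retract_mem (p : ℝ × ℝ) : retract p ∈ triangle a b :=
    ⟨le_min (le_max_left _ _) (le_max_left _ _), min_le_right _ _, max_le hab (min_le_right _ _)⟩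
  have retract_eq {p : ℝ × ℝ} (hp : p ∈ triangle a b) : retract p = p := by
    simp [retract, clamp, hp.1, hp.2.1, hp.2.2, hp.1.trans hp.2.1]
  have hcont : Continuous fun p => f.uncurry (retract p) :=
    hf.comp_continuous (by fun_prop) retract_mem
  have hint : Continuous fun z => ∫ s in a..z, f.uncurry (retract (z, s)) :=
    intervalIntegral.continuous_parametric_intervalIntegral_of_continuous hcont continuous_id
  refine hint.continuousOn.congr fun z hz => intervalIntegral.integral_congr fun s hs => ?_
  rw [uIcc_of_le hz.1] at hs
  have hmem : (z, s) ∈ triangle a b := ⟨hs.1, hs.2, hz.2⟩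
  simp only [retract_eq hmem, Function.uncurry_apply_pair]

theorem hasDerivAt_integral_of_continuousOn {F F' : ℝ → ℝ → E}
    (hF : ∀ t, ContinuousOn (F t) (uIcc a b))
    (hF' : ContinuousOn F'.uncurry (univ ×ˢ uIcc a b))
    (hderiv : ∀ t, ∀ s ∈ uIcc a b, HasDerivAt (fun t => F t s) (F' t s) t) (t : ℝ) :
    HasDerivAt (fun t => ∫ s in a..b, F t s) (∫ s in a..b, F' t s) t := by
  have hF't : ContinuousOn (F' t) (uIcc a b) :=
    hF'.comp (f := fun s => (t, s)) (by fun_prop) fun s hs => ⟨mem_univ t, hs⟩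
  obtain ⟨C, hC⟩ := ((isCompact_closedBall t 1).prod isCompact_uIcc).exists_bound_of_continuousOn
    (hF'.mono (prod_mono_left (subset_univ (Metric.closedBall t 1))))
  refine (intervalIntegral.hasDerivAt_integral_of_dominated_loc_of_deriv_le (bound := fun _ => C)
    (Metric.closedBall_mem_nhds t one_pos)
    (.of_forall fun t => ((hF t).mono uIoc_subset_uIcc).aestronglyMeasurable measurableSet_uIoc)
    (hF t).intervalIntegrable
    ((hF't.mono uIoc_subset_uIcc).aestronglyMeasurable measurableSet_uIoc)
    (.of_forall fun s hs t' ht' => hC (t', s) ⟨ht', uIoc_subset_uIcc hs⟩)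
    intervalIntegrable_const (.of_forall fun s hs t' _ => hderiv t' s (uIoc_subset_uIcc hs))).2

variable [CompleteSpace E]

theorem integral_eq_sub_of_hasDerivWithinAt_Icc {f f' : ℝ → E} (hab : a ≤ b)
    (hf : ∀ x ∈ Icc a b, HasDerivWithinAt f (f' x) (Icc a b) x)
    (hf' : IntervalIntegrable f' volume a b) :
    ∫ x in a..b, f' x = f b - f a :=
  intervalIntegral.integral_eq_sub_of_hasDerivAt_of_le hab
    (fun x hx => (hf x hx).continuousWithinAt)
    (fun x hx => (hf x (Ioo_subset_Icc_self hx)).hasDerivAt (Icc_mem_nhds hx.1 hx.2)) hf'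

theorem hasDerivWithinAt_integral_Icc {f : ℝ → E} (hf : ContinuousOn f (Icc a b)) {z : ℝ}
    (hz : z ∈ Icc a b) :
    HasDerivWithinAt (fun x => ∫ s in a..x, f s) (f z) (Icc a b) z :=
  have : Fact (z ∈ Icc a b) := ⟨hz⟩
  intervalIntegral.integral_hasDerivWithinAt_right
    ((hf.mono (Icc_subset_Icc_right hz.2)).intervalIntegrable_of_Icc hz.1)
    (hf.stronglyMeasurableAtFilter_nhdsWithin measurableSet_Icc z) (hf z hz)

theorem integral_eq_integral_diag_add_integral {F F' : ℝ → ℝ → E} (hab : a ≤ b)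
    (hF : ContinuousOn F.uncurry (triangle a b)) (hF' : ContinuousOn F'.uncurry (triangle a b))
    (hderiv : ∀ z s, (z, s) ∈ triangle a b →
      HasDerivWithinAt (fun z => F z s) (F' z s) (Icc s b) z) :
    ∫ s in a..b, F b s = ∫ z in a..b, (F z z + ∫ s in a..z, F' z s) := by
  have hdiag : IntervalIntegrable (fun z => F z z) volume a b :=
    (hF.comp (f := fun z => (z, z)) (by fun_prop)
      fun z hz => ⟨hz.1, le_rfl, hz.2⟩).intervalIntegrable_of_Icc hab
  have hrow : IntervalIntegrable (F b) volume a b :=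
    (hF.comp (f := fun s => (b, s)) (by fun_prop)
      fun s hs => ⟨hs.1, hs.2, le_rfl⟩).intervalIntegrable_of_Icc hab
  have hftc : ∀ s ∈ uIcc a b, ∫ z in s..b, F' z s = F b s - F s s := fun s hs => by
    rw [uIcc_of_le hab] at hs
    exact integral_eq_sub_of_hasDerivWithinAt_Icc hs.2
      (fun z hz => hderiv z s ⟨hs.1, hz.1, hz.2⟩)
      ((hF'.comp (f := fun z => (z, s)) (by fun_prop)
        fun z hz => ⟨hs.1, hz.1, hz.2⟩).intervalIntegrable_of_Icc hs.2)
  calc ∫ s in a..b, F b s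
      = (∫ s in a..b, F s s) + ∫ s in a..b, (F b s - F s s) := by
        rw [intervalIntegral.integral_sub hrow hdiag, add_sub_cancel]
    _ = (∫ s in a..b, F s s) + ∫ s in a..b, ∫ z in s..b, F' z s := by
        rw [intervalIntegral.integral_congr hftc]
    _ = (∫ z in a..b, F z z) + ∫ z in a..b, ∫ s in a..z, F' z s := by
        rw [integral_integral_swap_triangle hab (hF'.integrableOn_compact (isCompact_triangle a b))]
    _ = ∫ z in a..b, (F z z + ∫ s in a..z, F' z s) :=
        (intervalIntegral.integral_add hdiag
          ((continuousOn_integral_triangle hF').intervalIntegrable_of_Icc hab)).symm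

theorem hasDerivWithinAt_integral_triangle {F F' : ℝ → ℝ → E}
    (hF : ContinuousOn F.uncurry (triangle a b)) (hF' : ContinuousOn F'.uncurry (triangle a b))
    (hderiv : ∀ z s, (z, s) ∈ triangle a b →
      HasDerivWithinAt (fun z => F z s) (F' z s) (Icc s b) z)
    {z : ℝ} (hz : z ∈ Icc a b) :
    HasDerivWithinAt (fun z => ∫ s in a..z, F z s) (F z z + ∫ s in a..z, F' z s) (Icc a b) z := by
  have hdiag : ContinuousOn (fun z => F z z) (Icc a b) :=
    hF.comp (f := fun z => (z, z)) (by fun_prop) fun z hz => ⟨hz.1, le_rfl, hz.2⟩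
  have hprimitive : ∀ x ∈ Icc a b,
      ∫ s in a..x, F x s = ∫ y in a..x, (F y y + ∫ s in a..y, F' y s) := fun x hx => by
    have hsub : triangle a x ⊆ triangle a b := fun p hp => ⟨hp.1, hp.2.1, hp.2.2.trans hx.2⟩
    exact integral_eq_integral_diag_add_integral hx.1 (hF.mono hsub) (hF'.mono hsub)
      fun z s hp => (hderiv z s (hsub hp)).mono (Icc_subset_Icc_right hx.2)
  exact (hasDerivWithinAt_integral_Icc (hdiag.add (continuousOn_integral_triangle hF')) hz).congr
    hprimitive (hprimitive z hz)

end Leibniz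

section Volterra

open MeasureTheory

variable {E F : Type*} [NormedAddCommGroup E] [NormedSpace ℝ E] [NormedAddCommGroup F]
  [NormedSpace ℝ F] [CompleteSpace F] {a b : ℝ}

theorem hasDerivWithinAt_integral_volterra {K Kz : ℝ → ℝ → E →L[ℝ] F} {u : ℝ → E}
    (hK : ContinuousOn K.uncurry (triangle a b)) (hKz : ContinuousOn Kz.uncurry (triangle a b))
    (hKderiv : ∀ z s, (z, s) ∈ triangle a b →
      HasDerivWithinAt (fun z => K z s) (Kz z s) (Icc s b) z)
    (hu : ContinuousOn u (Icc a b)) {z : ℝ} (hz : z ∈ Icc a b) :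
    HasDerivWithinAt (fun z => ∫ s in a..z, K z s (u s))
      (K z z (u z) + ∫ s in a..z, Kz z s (u s)) (Icc a b) z := by
  have hu' : ContinuousOn (fun p : ℝ × ℝ => u p.2) (triangle a b) :=
    hu.comp continuousOn_snd fun p hp => ⟨hp.1, hp.2.1.trans hp.2.2⟩
  refine hasDerivWithinAt_integral_triangle (F := fun z s => K z s (u s))
    (F' := fun z s => Kz z s (u s)) (hK.clm_apply hu') (hKz.clm_apply hu') (fun z s hp => ?_) hz
  simpa using (hKderiv z s hp).clm_apply (hasDerivWithinAt_const z (Icc s b) (u s))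

/- With `z = b` the row `s ↦ K(z, s)` of a kernel is `k`, the row of `K_z` is `kz`, `dkΛ` is
`∂_s (K Λ)` and `Λ'` is the coefficient `Λ(z)`. -/
theorem integral_kernel_apply_eq {k kz dkΛ : ℝ → E →L[ℝ] F} {Λ A : ℝ → E →L[ℝ] E} {Λ' : F →L[ℝ] F}
    {u u' : ℝ → E} (hab : a ≤ b) (hk : ContinuousOn k (Icc a b)) (hkz : ContinuousOn kz (Icc a b))
    (hΛ : ContinuousOn Λ (Icc a b)) (hA : ContinuousOn A (Icc a b))
    (hkΛ : ∀ s ∈ Icc a b, HasDerivWithinAt (fun s => k s ∘L Λ s) (dkΛ s) (Icc a b) s)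
    (hkernel : ∀ s ∈ Icc a b, Λ' ∘L kz s + dkΛ s = k s ∘L A s)
    (hu : ∀ s ∈ Icc a b, HasDerivWithinAt u (u' s) (Icc a b) s)
    (hu' : ContinuousOn u' (Icc a b)) :
    ∫ s in a..b, k s (Λ s (u' s) + A s (u s)) =
      k b (Λ b (u b)) - k a (Λ a (u a)) + Λ' (∫ s in a..b, kz s (u s)) := by
  have hu₀ : ContinuousOn u (Icc a b) := fun s hs => (hu s hs).continuousWithinAt
  have hsource : IntervalIntegrable (fun s => k s (Λ s (u' s) + A s (u s))) volume a b :=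
    (hk.clm_apply ((hΛ.clm_apply hu').add (hA.clm_apply hu₀))).intervalIntegrable_of_Icc hab
  have hkzu : IntervalIntegrable (fun s => kz s (u s)) volume a b :=
    (hkz.clm_apply hu₀).intervalIntegrable_of_Icc hab
  have hΛkzu : IntervalIntegrable (fun s => Λ' (kz s (u s))) volume a b :=
    (Λ'.continuous.comp_continuousOn (hkz.clm_apply hu₀)).intervalIntegrable_of_Icc hab
  have hderiv : ∀ s ∈ Icc a b, HasDerivWithinAt (fun s => (k s ∘L Λ s) (u s))
      (k s (Λ s (u' s) + A s (u s)) - Λ' (kz s (u s))) (Icc a b) s := fun s hs => by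
    refine ((hkΛ s hs).clm_apply (hu s hs)).congr_deriv ?_
    have hkernel_u : Λ' (kz s (u s)) + dkΛ s (u s) = k s (A s (u s)) :=
      congr($(hkernel s hs) (u s))
    rw [map_add, ← hkernel_u, ContinuousLinearMap.comp_apply]
    abel
  have hftc := integral_eq_sub_of_hasDerivWithinAt_Icc hab hderiv (hsource.sub hΛkzu)
  rw [intervalIntegral.integral_sub hsource hΛkzu, Λ'.intervalIntegral_comp_comm hkzu] at hftc
  exact sub_eq_iff_eq_add.1 hftc

end Volterra

section Transport

variable {E : Type*} [NormedAddCommGroup E] [NormedSpace ℝ E] [CompleteSpace E] {a b : ℝ}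

theorem hasDerivAt_volterra_of_kernel_eq {k kz dkΛ Λ A : ℝ → E →L[ℝ] E} {x xz : ℝ → ℝ → E}
    (hab : a ≤ b) (hk : ContinuousOn k (Icc a b)) (hkz : ContinuousOn kz (Icc a b))
    (hΛ : ContinuousOn Λ (Icc a b)) (hA : ContinuousOn A (Icc a b))
    (hkΛ : ∀ s ∈ Icc a b, HasDerivWithinAt (fun s => k s ∘L Λ s) (dkΛ s) (Icc a b) s)
    (hkernel : ∀ s ∈ Icc a b, Λ b ∘L kz s + dkΛ s = k s ∘L A s)
    (hxz : ∀ t, ∀ s ∈ Icc a b, HasDerivWithinAt (fun s => x s t) (xz s t) (Icc a b) s)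
    (hxt : ∀ s ∈ Icc a b, ∀ t,
      HasDerivAt (fun t => x s t) (Λ s (xz s t) + A s (x s t)) t)
    (hxc : ContinuousOn x.uncurry (Icc a b ×ˢ univ))
    (hxzc : ContinuousOn xz.uncurry (Icc a b ×ˢ univ)) (t : ℝ) :
    HasDerivAt (fun t => x b t - ∫ s in a..b, k s (x s t))
      (Λ b (xz b t - (k b (x b t) + ∫ s in a..b, kz s (x s t))) +
        (A b + Λ b ∘L k b - k b ∘L Λ b) (x b t) + k a (Λ a (x a t))) t := by
  have hswap : ContinuousOn (Prod.swap : ℝ × ℝ → ℝ × ℝ) (univ ×ˢ uIcc a b) := by fun_prop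
  have hmaps : MapsTo Prod.swap ((univ : Set ℝ) ×ˢ uIcc a b) (Icc a b ×ˢ univ) := fun p hp =>
    ⟨uIcc_of_le hab ▸ hp.2, mem_univ _⟩
  have hsnd : MapsTo Prod.snd ((univ : Set ℝ) ×ˢ uIcc a b) (Icc a b) := fun p hp =>
    uIcc_of_le hab ▸ hp.2
  have hcoeff {B : ℝ → E →L[ℝ] E} (hB : ContinuousOn B (Icc a b)) :
      ContinuousOn (fun p : ℝ × ℝ => B p.2) (univ ×ˢ uIcc a b) :=
    hB.comp continuousOn_snd hsnd
  have hintegral : HasDerivAt (fun t => ∫ s in a..b, k s (x s t))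
      (∫ s in a..b, k s (Λ s (xz s t) + A s (x s t))) t :=
    hasDerivAt_integral_of_continuousOn (F := fun t s => k s (x s t))
      (F' := fun t s => k s (Λ s (xz s t) + A s (x s t)))
      (fun t => uIcc_of_le hab ▸ hk.clm_apply fun s hs => (hxz t s hs).continuousWithinAt)
      ((hcoeff hk).clm_apply (((hcoeff hΛ).clm_apply (hxzc.comp hswap hmaps)).add
        ((hcoeff hA).clm_apply (hxc.comp hswap hmaps))))
      (fun t s hs => (k s).hasFDerivAt.comp_hasDerivAt t (hxt s (uIcc_of_le hab ▸ hs) t)) t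
  rw [integral_kernel_apply_eq hab hk hkz hΛ hA hkΛ hkernel (hxz t)
    (hxzc.comp (f := fun s => (s, t)) (by fun_prop) fun s hs => ⟨hs, mem_univ t⟩)] at hintegral
  refine ((hxt b (right_mem_Icc.2 hab) t).sub hintegral).congr_deriv ?_
  simp only [map_sub, map_add, _root_.sub_apply, _root_.add_apply,
    ContinuousLinearMap.comp_apply]
  abel

end Transport

section MatrixKernel

variable {l m n : Type*} [Fintype l] [Fintype m] [Fintype n]

/-- Matrix-vector multiplication as a bundled continuous bilinear map, so that matrix-valued kernels
are operator-valued ones. -/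
noncomputable def mulVecCLM : Matrix m n ℝ →L[ℝ] (n → ℝ) →L[ℝ] (m → ℝ) :=
  (mulVecBilin ℝ ℝ).toContinuousBilinearMap

theorem mulVecCLM_apply (M : Matrix m n ℝ) (v : n → ℝ) : mulVecCLM M v = M *ᵥ v :=
  rfl

theorem mulVecCLM_mul (M : Matrix l m ℝ) (N : Matrix m n ℝ) :
    mulVecCLM (M * N) = mulVecCLM M ∘L mulVecCLM N := by
  ext1 v
  exact (mulVec_mulVec v M N).symm

theorem continuousOn_mulVecCLM {X : Type*} [TopologicalSpace X] {M : X → Matrix m n ℝ} {S : Set X}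
    (hM : ∀ i j, ContinuousOn (fun x => M x i j) S) :
    ContinuousOn (fun x => mulVecCLM (M x)) S :=
  mulVecCLM.continuous.comp_continuousOn
    (continuousOn_pi.2 fun i => continuousOn_pi.2 fun j => hM i j)

open scoped Matrix.Norms.Elementwise in
theorem hasDerivWithinAt_mulVecCLM {M : ℝ → Matrix m n ℝ} {M' : Matrix m n ℝ} {S : Set ℝ} {x : ℝ}
    (hM : ∀ i j, HasDerivWithinAt (fun x => M x i j) (M' i j) S x) :
    HasDerivWithinAt (fun x => mulVecCLM (M x)) (mulVecCLM M') S x :=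
  mulVecCLM.hasFDerivAt.comp_hasDerivWithinAt x
    (hasDerivWithinAt_pi.2 fun i => hasDerivWithinAt_pi.2 fun j => hM i j)

theorem hasDerivAt_mulVec_volterra_of_kernel_eq {a b : ℝ} {k kz dkΛ Λ A : ℝ → Matrix n n ℝ}
    {x xz : ℝ → ℝ → n → ℝ} (hab : a ≤ b)
    (hk : ∀ i j, ContinuousOn (fun s => k s i j) (Icc a b))
    (hkz : ∀ i j, ContinuousOn (fun s => kz s i j) (Icc a b))
    (hΛ : ∀ i j, ContinuousOn (fun s => Λ s i j) (Icc a b))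
    (hA : ∀ i j, ContinuousOn (fun s => A s i j) (Icc a b))
    (hkΛ : ∀ s ∈ Icc a b, ∀ i j,
      HasDerivWithinAt (fun s => (k s * Λ s) i j) (dkΛ s i j) (Icc a b) s)
    (hkernel : ∀ s ∈ Icc a b, Λ b * kz s + dkΛ s = k s * A s)
    (hxz : ∀ t, ∀ s ∈ Icc a b, HasDerivWithinAt (fun s => x s t) (xz s t) (Icc a b) s)
    (hxt : ∀ s ∈ Icc a b, ∀ t,
      HasDerivAt (fun t => x s t) (Λ s *ᵥ xz s t + A s *ᵥ x s t) t)
    (hxc : ContinuousOn x.uncurry (Icc a b ×ˢ univ))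
    (hxzc : ContinuousOn xz.uncurry (Icc a b ×ˢ univ)) (t : ℝ) :
    HasDerivAt (fun t => x b t - ∫ s in a..b, k s *ᵥ x s t)
      (Λ b *ᵥ (xz b t - (k b *ᵥ x b t + ∫ s in a..b, kz s *ᵥ x s t)) +
        (A b + Λ b * k b - k b * Λ b) *ᵥ x b t + (k a * Λ a) *ᵥ x a t) t := by
  have htransport := hasDerivAt_volterra_of_kernel_eq
    (k := fun s => mulVecCLM (k s)) (kz := fun s => mulVecCLM (kz s))
    (dkΛ := fun s => mulVecCLM (dkΛ s)) (Λ := fun s => mulVecCLM (Λ s))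
    (A := fun s => mulVecCLM (A s)) hab (continuousOn_mulVecCLM hk) (continuousOn_mulVecCLM hkz)
    (continuousOn_mulVecCLM hΛ) (continuousOn_mulVecCLM hA)
    (fun s hs => by simpa only [mulVecCLM_mul] using hasDerivWithinAt_mulVecCLM (hkΛ s hs))
    (fun s hs => by simpa only [map_add, mulVecCLM_mul] using congr(mulVecCLM $(hkernel s hs)))
    hxz hxt hxc hxzc t
  simpa only [← mulVecCLM_mul, ← map_add, ← map_sub, mulVecCLM_apply, mulVec_mulVec]
    using htransport

end MatrixKernel

section LamMat

variable {lam1 lam2 : ℝ → ℝ} {z : ℝ} {K : Matrix (Fin 2) (Fin 2) ℝ}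

theorem lamMat_eq_diagonal (lam1 lam2 : ℝ → ℝ) (z : ℝ) :
    LamMat lam1 lam2 z = diagonal ![lam1 z, -lam2 z] :=
  (diagonal_fin_two ![lam1 z, -lam2 z]).symm

theorem continuousOn_lamMat_apply {S : Set ℝ} (h1 : ContinuousOn lam1 S) (h2 : ContinuousOn lam2 S)
    (i j : Fin 2) : ContinuousOn (fun z => LamMat lam1 lam2 z i j) S := by
  fin_cases i <;> fin_cases j
  exacts [h1, continuousOn_const, continuousOn_const, h2.neg]

theorem add_lamMat_mul_sub_mul_lamMat_eq_zero {A : Matrix (Fin 2) (Fin 2) ℝ}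
    (hsum : lam1 z + lam2 z ≠ 0) (hA : A 0 0 = 0 ∧ A 1 1 = 0)
    (h01 : K 0 1 = -A 0 1 / (lam1 z + lam2 z)) (h10 : K 1 0 = A 1 0 / (lam1 z + lam2 z)) :
    A + LamMat lam1 lam2 z * K - K * LamMat lam1 lam2 z = 0 := by
  rw [eq_div_iff hsum] at h01 h10
  ext i j
  rw [lamMat_eq_diagonal, Matrix.sub_apply, Matrix.add_apply, diagonal_mul, mul_diagonal]
  fin_cases i <;> fin_cases j <;> simp [hA]
  · ring
  · linear_combination h01
  · linear_combination -h10
  · ring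

theorem mul_lamMat_mulVec_eq_zero {q : ℝ} (hq : q ≠ 0) (h1 : lam1 z ≠ 0) (h2 : lam2 z ≠ 0)
    (h00 : K 0 0 = q * lam2 z / lam1 z * K 0 1) (h11 : K 1 1 = lam1 z / (q * lam2 z) * K 1 0) :
    (K * LamMat lam1 lam2 z) *ᵥ ![1, q] = 0 := by
  ext i
  fin_cases i <;> simp [lamMat_eq_diagonal, mulVec_eq_sum, h00, h11] <;> field_simp <;> ring

theorem mulVec_eq_smul_mulVec_single {M : Matrix (Fin 2) (Fin 2) ℝ} {q d : ℝ} {v : Fin 2 → ℝ}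
    (hM : M *ᵥ ![1, q] = 0) (hv : v 1 = q * v 0 + d) : M *ᵥ v = d • M *ᵥ Pi.single 1 1 := by
  have hdecomp : v = v 0 • ![1, q] + d • Pi.single 1 1 := by
    ext i
    fin_cases i <;> simp [hv, mul_comm]
  conv_lhs => rw [hdecomp, mulVec_add, mulVec_smul, mulVec_smul, hM, smul_zero, zero_add]

end LamMat

theorem stmt_11_general {lam1 lam2 : ℝ → ℝ} (hl1 : ContinuousOn lam1 (Icc 0 1))
    (hl2 : ContinuousOn lam2 (Icc 0 1)) (hsum : ∀ z ∈ Icc (0 : ℝ) 1, lam1 z + lam2 z ≠ 0)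
    (hl1₀ : lam1 0 ≠ 0) (hl2₀ : lam2 0 ≠ 0) {At : ℝ → Matrix (Fin 2) (Fin 2) ℝ}
    (hAtc : ∀ i j, ContinuousOn (fun z => At z i j) (Icc 0 1))
    (hAtdiag : ∀ z ∈ Icc (0 : ℝ) 1, At z 0 0 = 0 ∧ At z 1 1 = 0) {q₀ : ℝ} (hq₀ : q₀ ≠ 0)
    {K Kz dKL : ℝ → ℝ → Matrix (Fin 2) (Fin 2) ℝ}
    (hKz : ∀ z ζ, 0 ≤ ζ → ζ ≤ z → z ≤ 1 → ∀ i j,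
      HasDerivWithinAt (fun z' => K z' ζ i j) (Kz z ζ i j) (Icc ζ 1) z)
    (hKL : ∀ z ζ, 0 ≤ ζ → ζ ≤ z → z ≤ 1 → ∀ i j,
      HasDerivWithinAt (fun ζ' => (K z ζ' * LamMat lam1 lam2 ζ') i j) (dKL z ζ i j) (Icc 0 z) ζ)
    (hker : ∀ z ζ, 0 ≤ ζ → ζ ≤ z → z ≤ 1 → LamMat lam1 lam2 z * Kz z ζ + dKL z ζ = K z ζ * At ζ)
    (hbc11 : ∀ z ∈ Icc (0 : ℝ) 1, K z 0 0 0 = q₀ * lam2 0 / lam1 0 * K z 0 0 1)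
    (hbc12 : ∀ z ∈ Icc (0 : ℝ) 1, K z z 0 1 = -At z 0 1 / (lam1 z + lam2 z))
    (hbc21 : ∀ z ∈ Icc (0 : ℝ) 1, K z z 1 0 = At z 1 0 / (lam1 z + lam2 z))
    (hbc22 : ∀ z ∈ Icc (0 : ℝ) 1, K z 0 1 1 = lam1 0 / (q₀ * lam2 0) * K z 0 1 0)
    (hKc : ∀ i j, ContinuousOn (fun p : ℝ × ℝ => K p.1 p.2 i j) (triangle 0 1))
    (hKzc : ∀ i j, ContinuousOn (fun p : ℝ × ℝ => Kz p.1 p.2 i j) (triangle 0 1))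
    {xt xz : ℝ → ℝ → Fin 2 → ℝ} {d : ℝ → ℝ}
    (hxz : ∀ t, ∀ z ∈ Icc (0 : ℝ) 1, HasDerivWithinAt (fun z' => xt z' t) (xz z t) (Icc 0 1) z)
    (hxt : ∀ z ∈ Icc (0 : ℝ) 1, ∀ t,
      HasDerivAt (fun t' => xt z t') (LamMat lam1 lam2 z *ᵥ xz z t + At z *ᵥ xt z t) t)
    (hxc : ContinuousOn (fun p : ℝ × ℝ => xt p.1 p.2) (Icc 0 1 ×ˢ univ))
    (hxzc : ContinuousOn (fun p : ℝ × ℝ => xz p.1 p.2) (Icc 0 1 ×ˢ univ))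
    (hbc0 : ∀ t, xt 0 t 1 = q₀ * xt 0 t 0 + d t) :
    ∃ xbz : ℝ → ℝ → Fin 2 → ℝ, ∀ z ∈ Icc (0 : ℝ) 1, ∀ t,
      HasDerivWithinAt (fun z' => volterraSub K xt z' t) (xbz z t) (Icc 0 1) z ∧
      HasDerivAt (fun t' => volterraSub K xt z t')
        (LamMat lam1 lam2 z *ᵥ xbz z t +
          d t • (K z 0 * LamMat lam1 lam2 0) *ᵥ Pi.single 1 1) t := by
  refine ⟨fun z t => xz z t - (K z z *ᵥ xt z t + ∫ ζ in (0 : ℝ)..z, Kz z ζ *ᵥ xt ζ t),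
    fun z hz t => ⟨?_, ?_⟩⟩
  · exact (hxz t z hz).sub (hasDerivWithinAt_integral_volterra
      (K := fun z ζ => mulVecCLM (K z ζ)) (Kz := fun z ζ => mulVecCLM (Kz z ζ))
      (continuousOn_mulVecCLM hKc) (continuousOn_mulVecCLM hKzc)
      (fun z ζ hζ => hasDerivWithinAt_mulVecCLM (hKz z ζ hζ.1 hζ.2.1 hζ.2.2))
      (fun z hz => (hxz t z hz).continuousWithinAt) hz)
  · have hsub : Icc 0 z ⊆ Icc 0 1 := Icc_subset_Icc_right hz.2
    have hsub' : Icc 0 z ×ˢ (univ : Set ℝ) ⊆ Icc 0 1 ×ˢ univ := prod_mono_left hsub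
    have hrow : MapsTo (fun ζ => (z, ζ)) (Icc 0 z) (triangle 0 1) := fun ζ hζ => ⟨hζ.1, hζ.2, hz.2⟩
    have hcoupling : At z + LamMat lam1 lam2 z * K z z - K z z * LamMat lam1 lam2 z = 0 :=
      add_lamMat_mul_sub_mul_lamMat_eq_zero (hsum z hz) (hAtdiag z hz) (hbc12 z hz) (hbc21 z hz)
    have hboundary : (K z 0 * LamMat lam1 lam2 0) *ᵥ xt 0 t =
        d t • (K z 0 * LamMat lam1 lam2 0) *ᵥ Pi.single 1 1 :=
      mulVec_eq_smul_mulVec_single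
        (mul_lamMat_mulVec_eq_zero hq₀ hl1₀ hl2₀ (hbc11 z hz) (hbc22 z hz)) (hbc0 t)
    have htransport := hasDerivAt_mulVec_volterra_of_kernel_eq (k := K z) (kz := Kz z) hz.1
      (fun i j => (hKc i j).comp (by fun_prop) hrow) (fun i j => (hKzc i j).comp (by fun_prop) hrow)
      (fun i j => (continuousOn_lamMat_apply hl1 hl2 i j).mono hsub)
      (fun i j => (hAtc i j).mono hsub) (fun ζ hζ => hKL z ζ hζ.1 hζ.2 hz.2)
      (fun ζ hζ => hker z ζ hζ.1 hζ.2 hz.2) (fun t ζ hζ => (hxz t ζ (hsub hζ)).mono hsub)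
      (fun ζ hζ => hxt ζ (hsub hζ)) (hxc.mono hsub') (hxzc.mono hsub') t
    rwa [hcoupling, hboundary, zero_mulVec, add_zero] at htransport

/-- If the kernel `K` solves the kernel equations with the stated
boundary conditions on the triangle, then the Volterra transformation
`x̄(z,t) = x̃(z,t) - ∫₀^z K(z,ζ) x̃(ζ,t) dζ` maps the anti-diagonally coupled
hyperbolic system (with ODE-dependent boundary condition at `z = 0`) into
`∂_t x̄ = Λ(z) ∂_z x̄ + K(z,0) Λ(0) e₂ cᵀ ξ(t)`. -/
theorem stmt_11 (n : ℕ)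
    (lam1 lam2 dlam1 dlam2 : ℝ → ℝ)
    (hl1p : ∀ z ∈ Icc (0:ℝ) 1, 0 < lam1 z) (hl2p : ∀ z ∈ Icc (0:ℝ) 1, 0 < lam2 z)
    (hl1d : ∀ z ∈ Icc (0:ℝ) 1, HasDerivWithinAt lam1 (dlam1 z) (Icc 0 1) z)
    (hl2d : ∀ z ∈ Icc (0:ℝ) 1, HasDerivWithinAt lam2 (dlam2 z) (Icc 0 1) z)
    (hl1dc : ContinuousOn dlam1 (Icc 0 1)) (hl2dc : ContinuousOn dlam2 (Icc 0 1))
    (At : ℝ → Matrix (Fin 2) (Fin 2) ℝ)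
    (hAtc : ∀ i j : Fin 2, ContinuousOn (fun z => At z i j) (Icc 0 1))
    (hAtdiag : ∀ z ∈ Icc (0:ℝ) 1, At z 0 0 = 0 ∧ At z 1 1 = 0)
    (q₀ : ℝ) (hq₀ : q₀ ≠ 0) (c : Fin n → ℝ)
    (K Kz dKL : ℝ → ℝ → Matrix (Fin 2) (Fin 2) ℝ)
    (hKz : ∀ z ζ : ℝ, 0 ≤ ζ → ζ ≤ z → z ≤ 1 → ∀ i j : Fin 2,
      HasDerivWithinAt (fun z' => K z' ζ i j) (Kz z ζ i j) (Icc ζ 1) z)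
    (hKL : ∀ z ζ : ℝ, 0 ≤ ζ → ζ ≤ z → z ≤ 1 → ∀ i j : Fin 2,
      HasDerivWithinAt (fun ζ' => (K z ζ' * LamMat lam1 lam2 ζ') i j)
        (dKL z ζ i j) (Icc 0 z) ζ)
    (hker : ∀ z ζ : ℝ, 0 ≤ ζ → ζ ≤ z → z ≤ 1 →
      LamMat lam1 lam2 z * Kz z ζ + dKL z ζ = K z ζ * At ζ)
    (hbc11 : ∀ z ∈ Icc (0:ℝ) 1, K z 0 0 0 = q₀ * lam2 0 / lam1 0 * K z 0 0 1)
    (hbc12 : ∀ z ∈ Icc (0:ℝ) 1, K z z 0 1 = -At z 0 1 / (lam1 z + lam2 z))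
    (hbc21 : ∀ z ∈ Icc (0:ℝ) 1, K z z 1 0 = At z 1 0 / (lam1 z + lam2 z))
    (hbc22 : ∀ z ∈ Icc (0:ℝ) 1, K z 0 1 1 = lam1 0 / (q₀ * lam2 0) * K z 0 1 0)
    (hKc : ∀ i j : Fin 2, ContinuousOn (fun p : ℝ × ℝ => K p.1 p.2 i j)
      {p : ℝ × ℝ | 0 ≤ p.2 ∧ p.2 ≤ p.1 ∧ p.1 ≤ 1})
    (hKzc : ∀ i j : Fin 2, ContinuousOn (fun p : ℝ × ℝ => Kz p.1 p.2 i j)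
      {p : ℝ × ℝ | 0 ≤ p.2 ∧ p.2 ≤ p.1 ∧ p.1 ≤ 1})
    (hdKLc : ∀ i j : Fin 2, ContinuousOn (fun p : ℝ × ℝ => dKL p.1 p.2 i j)
      {p : ℝ × ℝ | 0 ≤ p.2 ∧ p.2 ≤ p.1 ∧ p.1 ≤ 1})
    (xt xz : ℝ → ℝ → Fin 2 → ℝ) (ξ : ℝ → Fin n → ℝ) (hξ : Continuous ξ)
    (hxz : ∀ t : ℝ, ∀ z ∈ Icc (0:ℝ) 1,
      HasDerivWithinAt (fun z' => xt z' t) (xz z t) (Icc 0 1) z)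
    (hxt : ∀ z ∈ Icc (0:ℝ) 1, ∀ t : ℝ, HasDerivAt (fun t' => xt z t')
      ((LamMat lam1 lam2 z).mulVec (xz z t) + (At z).mulVec (xt z t)) t)
    (hxc : ContinuousOn (fun p : ℝ × ℝ => xt p.1 p.2) (Icc 0 1 ×ˢ univ))
    (hxzc : ContinuousOn (fun p : ℝ × ℝ => xz p.1 p.2) (Icc 0 1 ×ˢ univ))
    (hbc0 : ∀ t : ℝ, xt 0 t 1 = q₀ * xt 0 t 0 + c ⬝ᵥ ξ t) :
    ∃ xbz : ℝ → ℝ → Fin 2 → ℝ, ∀ z ∈ Icc (0:ℝ) 1, ∀ t : ℝ,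
      HasDerivWithinAt (fun z' => volterraSub K xt z' t) (xbz z t) (Icc 0 1) z ∧
      HasDerivAt (fun t' => volterraSub K xt z t')
        ((LamMat lam1 lam2 z).mulVec (xbz z t) +
          (c ⬝ᵥ ξ t) • ((K z 0 * LamMat lam1 lam2 0).mulVec (Pi.single 1 1))) t :=
  stmt_11_general (fun z hz => (hl1d z hz).continuousWithinAt)
    (fun z hz => (hl2d z hz).continuousWithinAt)
    (fun z hz => (add_pos (hl1p z hz) (hl2p z hz)).ne')
    (hl1p 0 ⟨le_rfl, zero_le_one⟩).ne' (hl2p 0 ⟨le_rfl, zero_le_one⟩).ne' hAtc hAtdiag hq₀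
    hKz hKL hker hbc11 hbc12 hbc21 hbc22 hKc hKzc hxz hxt hxc hxzc hbc0
end

section
/- Let λ₁, λ₂ : [0,1] → ℝ be continuous with λ₁, λ₂ > 0, set Λ(z) = diag(λ₁(z), −λ₂(z)), let C : [0,1] → ℝ^{2×n} be continuous, let F ∈ ℝ^{n×n}, b, k, c ∈ ℝⁿ and q₀ ∈ ℝ. Let N : [0,1] → ℝ^{2×n} be continuously differentiable with Λ(z) N'(z) = N(z)(F + b kᵀ) − C(z) for all z ∈ [0,1] and N(0) = [kᵀ; cᵀ + q₀ kᵀ] (rows). Suppose e_ξ : ℝ → ℝⁿ is differentiable and ε : [0,1] × ℝ → ℝ² is continuously differentiable with e_ξ'(t) = F e_ξ(t) + b ε₁(0,t), ε₂(0,t) = q₀ ε₁(0,t) + cᵀ e_ξ(t), and ∂_t ε(z,t) = Λ(z) ∂_z ε(z,t) + C(z) e_ξ(t) for all (z,t). Then ε̃(z,t) = ε(z,t) − N(z) e_ξ(t) satisfies e_ξ'(t) = (F + b kᵀ) e_ξ(t) + b ε̃₁(0,t), ε̃₂(0,t) = q₀ ε̃₁(0,t), and ∂_t ε̃(z,t)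 = Λ(z) ∂_z ε̃(z,t) − N(z) b ε̃₁(0,t) for all (z,t). -/
/-!
The feedback `kᵀ e_ξ` is the first component of `N(0) e_ξ`, so `ε₁(0,t) - kᵀ e_ξ(t) = ε̃₁(0,t)` is
the input of the ODE once `b kᵀ` has been absorbed into `A = F + b kᵀ`. Differentiating
`N(z) e_ξ(t)` in `t` along `e_ξ' = A e_ξ + b ε̃₁(0,·)` gives `N A e_ξ + N b ε̃₁(0,·)`, and the
decoupling equation `N A = Λ N' + C` turns the first term into exactly what has to be subtracted
from `Λ ∂_z ε + C e_ξ` to leave `Λ ∂_z ε̃`.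
-/

open Set Matrix

section Backstepping

variable {𝕜 ι κ : Type*}

lemma add_vecMulVec_mulVec {R : Type*} [CommSemiring R] [Fintype κ] (F : Matrix ι κ R) (b : ι → R)
    (k v : κ → R) :
    (F + vecMulVec b k) *ᵥ v = F *ᵥ v + (k ⬝ᵥ v) • b := by
  rw [add_mulVec, vecMulVec_mulVec, op_smul_eq_smul]

/-- The backstepping transformation `ε̃(z,t) = ε(z,t) - N(z) ξ(t)`, which shifts the distributed
state `ε` by a linear image of the lumped state `ξ`. -/
def backstep [Ring 𝕜] [Fintype κ] (N : 𝕜 → Matrix ι κ 𝕜) (ξ : 𝕜 → κ → 𝕜)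
    (ε : 𝕜 → 𝕜 → ι → 𝕜) (z t : 𝕜) : ι → 𝕜 :=
  ε z t - N z *ᵥ ξ t

lemma backstep_apply_of_row_eq [Ring 𝕜] [Fintype κ] {N : 𝕜 → Matrix ι κ 𝕜} {z : 𝕜} {i : ι}
    {k : κ → 𝕜} (hN : N z i = k) (ξ : 𝕜 → κ → 𝕜) (ε : 𝕜 → 𝕜 → ι → 𝕜) (t : 𝕜) :
    backstep N ξ ε z t i = ε z t i - k ⬝ᵥ ξ t := by
  rw [← hN]
  rfl

lemma backstep_boundary [CommRing 𝕜] [Fintype κ] {N : 𝕜 → Matrix ι κ 𝕜} {z t q : 𝕜} {i j : ι}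
    {k c : κ → 𝕜} {ξ : 𝕜 → κ → 𝕜} {ε : 𝕜 → 𝕜 → ι → 𝕜} (hi : N z i = k) (hj : N z j = c + q • k)
    (hε : ε z t j = q * ε z t i + c ⬝ᵥ ξ t) :
    backstep N ξ ε z t j = q * backstep N ξ ε z t i := by
  rw [backstep_apply_of_row_eq hi, backstep_apply_of_row_eq hj, hε, add_dotProduct,
    smul_dotProduct, smul_eq_mul]
  ring

section Calculus

variable [NontriviallyNormedField 𝕜] [Fintype κ]

lemma hasDerivWithinAt_mulVec_const {M : 𝕜 → Matrix ι κ 𝕜} {M' : Matrix ι κ 𝕜} {s : Set 𝕜} {x : 𝕜}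
    (hM : ∀ i j, HasDerivWithinAt (fun y => M y i j) (M' i j) s x) (v : κ → 𝕜) :
    HasDerivWithinAt (fun y => M y *ᵥ v) (M' *ᵥ v) s x :=
  hasDerivWithinAt_pi.2 fun i => .fun_sum fun j _ => (hM i j).mul_const (v j)

lemma hasDerivAt_const_mulVec (M : Matrix ι κ 𝕜) {v : 𝕜 → κ → 𝕜} {v' : κ → 𝕜} {x : 𝕜}
    (hv : HasDerivAt v v' x) : HasDerivAt (fun y => M *ᵥ v y) (M *ᵥ v') x :=
  hasDerivAt_pi.2 fun i => .fun_sum fun j _ => (hasDerivAt_pi.1 hv j).const_mul (M i j)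

lemma hasDerivAt_closedLoop {F : Matrix κ κ 𝕜} {b : κ → 𝕜} {ξ : 𝕜 → κ → 𝕜} {u t : 𝕜}
    (hξ : HasDerivAt ξ (F *ᵥ ξ t + u • b) t) (k : κ → 𝕜) :
    HasDerivAt ξ ((F + vecMulVec b k) *ᵥ ξ t + (u - k ⬝ᵥ ξ t) • b) t := by
  refine hξ.congr_deriv ?_
  rw [add_vecMulVec_mulVec]
  module

lemma hasDerivWithinAt_backstep_space {N : 𝕜 → Matrix ι κ 𝕜} {N' : Matrix ι κ 𝕜}
    {ε : 𝕜 → 𝕜 → ι → 𝕜} {εz : ι → 𝕜} {s : Set 𝕜} {z t : 𝕜} (ξ : 𝕜 → κ → 𝕜)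
    (hN : ∀ i j, HasDerivWithinAt (fun y => N y i j) (N' i j) s z)
    (hε : HasDerivWithinAt (fun y => ε y t) εz s z) :
    HasDerivWithinAt (fun y => backstep N ξ ε y t) (εz - N' *ᵥ ξ t) s z :=
  hasDerivWithinAt_pi.2 fun i =>
    (hasDerivWithinAt_pi.1 hε i).fun_sub
      (hasDerivWithinAt_pi.1 (hasDerivWithinAt_mulVec_const hN (ξ t)) i)

variable [Fintype ι]

lemma hasDerivAt_backstep_time {Λ : Matrix ι ι 𝕜} {N : 𝕜 → Matrix ι κ 𝕜} {N' C : Matrix ι κ 𝕜}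
    {A : Matrix κ κ 𝕜} {b : κ → 𝕜} {ξ : 𝕜 → κ → 𝕜} {ε : 𝕜 → 𝕜 → ι → 𝕜} {εz : ι → 𝕜} {u z t : 𝕜}
    (hN : Λ * N' = N z * A - C) (hξ : HasDerivAt ξ (A *ᵥ ξ t + u • b) t)
    (hε : HasDerivAt (ε z) (Λ *ᵥ εz + C *ᵥ ξ t) t) :
    HasDerivAt (backstep N ξ ε z) (Λ *ᵥ (εz - N' *ᵥ ξ t) - u • (N z *ᵥ b)) t := by
  refine (hε.fun_sub (hasDerivAt_const_mulVec (N z) hξ)).congr_deriv ?_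
  have decoupling : Λ *ᵥ (N' *ᵥ ξ t) = N z *ᵥ (A *ᵥ ξ t) - C *ᵥ ξ t := by
    rw [mulVec_mulVec, hN, sub_mulVec, mulVec_mulVec]
  rw [mulVec_sub, decoupling, mulVec_add, mulVec_smul]
  abel

theorem stmt_12_general {s : Set 𝕜} {z₀ q₀ : 𝕜} {i₀ i₁ : ι} {Λ : 𝕜 → Matrix ι ι 𝕜}
    {C N dN : 𝕜 → Matrix ι κ 𝕜} {F : Matrix κ κ 𝕜} {b k c : κ → 𝕜}
    {ξ : 𝕜 → κ → 𝕜} {ε εz : 𝕜 → 𝕜 → ι → 𝕜}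
    (hNd : ∀ z ∈ s, ∀ i j, HasDerivWithinAt (fun z' => N z' i j) (dN z i j) s z)
    (hNeq : ∀ z ∈ s, Λ z * dN z = N z * (F + vecMulVec b k) - C z)
    (hNi₀ : N z₀ i₀ = k) (hNi₁ : N z₀ i₁ = c + q₀ • k)
    (hξ : ∀ t, HasDerivAt ξ (F *ᵥ ξ t + ε z₀ t i₀ • b) t)
    (hbc : ∀ t, ε z₀ t i₁ = q₀ * ε z₀ t i₀ + c ⬝ᵥ ξ t)
    (hεz : ∀ t, ∀ z ∈ s, HasDerivWithinAt (fun z' => ε z' t) (εz z t) s z)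
    (hεt : ∀ z ∈ s, ∀ t, HasDerivAt (ε z) (Λ z *ᵥ εz z t + C z *ᵥ ξ t) t) :
    (∀ t, HasDerivAt ξ
      ((F + vecMulVec b k) *ᵥ ξ t + backstep N ξ ε z₀ t i₀ • b) t) ∧
    (∀ t, backstep N ξ ε z₀ t i₁ = q₀ * backstep N ξ ε z₀ t i₀) ∧
    (∀ z ∈ s, ∀ t,
      HasDerivWithinAt (fun z' => backstep N ξ ε z' t) (εz z t - dN z *ᵥ ξ t) s z ∧
      HasDerivAt (backstep N ξ ε z)
        (Λ z *ᵥ (εz z t - dN z *ᵥ ξ t) - backstep N ξ ε z₀ t i₀ • (N z *ᵥ b)) t) := by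
  have closedLoop : ∀ t, HasDerivAt ξ
      ((F + vecMulVec b k) *ᵥ ξ t + backstep N ξ ε z₀ t i₀ • b) t := fun t => by
    rw [backstep_apply_of_row_eq hNi₀]
    exact hasDerivAt_closedLoop (hξ t) k
  exact ⟨closedLoop, fun t => backstep_boundary hNi₀ hNi₁ (hbc t), fun z hz t =>
    ⟨hasDerivWithinAt_backstep_space ξ (hNd z hz) (hεz t z hz),
      hasDerivAt_backstep_time (hNeq z hz) (closedLoop t) (hεt z hz t)⟩⟩

end Calculus

end Backstepping

/-- The backstepping (decoupling) transformation
`ε̃(z,t) = ε(z,t) - N(z) e_ξ(t)`, with `N` solving the decoupling IVP, maps the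
PDE-ODE error system into the form with stabilized ODE
`e_ξ' = (F + b kᵀ) e_ξ + b ε̃₁(0,·)`, boundary condition `ε̃₂(0,·) = q₀ ε̃₁(0,·)`,
and PDE `∂_t ε̃ = Λ ∂_z ε̃ - N(z) b ε̃₁(0,·)`. -/
theorem stmt_12 (n : ℕ) (lam1 lam2 : ℝ → ℝ)
    (hl1c : ContinuousOn lam1 (Icc 0 1)) (hl2c : ContinuousOn lam2 (Icc 0 1))
    (hl1p : ∀ z ∈ Icc (0:ℝ) 1, 0 < lam1 z) (hl2p : ∀ z ∈ Icc (0:ℝ) 1, 0 < lam2 z)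
    (C : ℝ → Matrix (Fin 2) (Fin n) ℝ)
    (hC : ∀ (i : Fin 2) (j : Fin n), ContinuousOn (fun z => C z i j) (Icc 0 1))
    (F : Matrix (Fin n) (Fin n) ℝ) (b k c : Fin n → ℝ) (q₀ : ℝ)
    (N dN : ℝ → Matrix (Fin 2) (Fin n) ℝ)
    (hNd : ∀ z ∈ Icc (0:ℝ) 1, ∀ (i : Fin 2) (j : Fin n),
      HasDerivWithinAt (fun z' => N z' i j) (dN z i j) (Icc 0 1) z)
    (hNeq : ∀ z ∈ Icc (0:ℝ) 1,
      LamMat lam1 lam2 z * dN z = N z * (F + Matrix.vecMulVec b k) - C z)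
    (hN00 : N 0 0 = k) (hN01 : N 0 1 = c + q₀ • k)
    (eξ : ℝ → Fin n → ℝ) (ε εz : ℝ → ℝ → Fin 2 → ℝ)
    (heξ : ∀ t : ℝ, HasDerivAt eξ (F.mulVec (eξ t) + ε 0 t 0 • b) t)
    (hbc0 : ∀ t : ℝ, ε 0 t 1 = q₀ * ε 0 t 0 + c ⬝ᵥ eξ t)
    (hεz : ∀ t : ℝ, ∀ z ∈ Icc (0:ℝ) 1,
      HasDerivWithinAt (fun z' => ε z' t) (εz z t) (Icc 0 1) z)
    (hεt : ∀ z ∈ Icc (0:ℝ) 1, ∀ t : ℝ, HasDerivAt (fun t' => ε z t')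
      ((LamMat lam1 lam2 z).mulVec (εz z t) + (C z).mulVec (eξ t)) t) :
    (∀ t : ℝ, HasDerivAt eξ
      ((F + Matrix.vecMulVec b k).mulVec (eξ t) +
        (ε 0 t 0 - (N 0).mulVec (eξ t) 0) • b) t) ∧
    (∀ t : ℝ, ε 0 t 1 - (N 0).mulVec (eξ t) 1 =
      q₀ * (ε 0 t 0 - (N 0).mulVec (eξ t) 0)) ∧
    (∀ z ∈ Icc (0:ℝ) 1, ∀ t : ℝ,
      HasDerivWithinAt (fun z' => ε z' t - (N z').mulVec (eξ t))
        (εz z t - (dN z).mulVec (eξ t)) (Icc 0 1) z ∧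
      HasDerivAt (fun t' => ε z t' - (N z).mulVec (eξ t'))
        ((LamMat lam1 lam2 z).mulVec (εz z t - (dN z).mulVec (eξ t)) -
          (ε 0 t 0 - (N 0).mulVec (eξ t) 0) • ((N z).mulVec b)) t) :=
  stmt_12_general hNd hNeq hN00 hN01 heξ hbc0 hεz hεt
end

section
/- Let λ : [0,1] → ℝ be continuous with λ > 0, define φ(z) = ∫₀^z dζ/λ(ζ) and let ψ : [0, φ(1)] → [0,1] denote the inverse of φ. Let p : [0, φ(1)] → ℝ be continuously differentiable, and define P(z,ζ) = p(φ(z) − φ(ζ)) / λ(ζ) on the triangle 𝒯 = {(z,ζ) : 0 ≤ ζ ≤ z ≤ 1}. Then: (i) λ(z) ∂_z P(z,ζ) + ∂_ζ (P(z,ζ) λ(ζ)) = 0 for all (z,ζ) ∈ 𝒯 with ζ < z; (ii) P(z,z) = p(0)/λ(z) for all z; and (iii) if additionally v : [0,1] → ℝ is continuous and p satisfies the Volterra integral equation ∫₀^τ v(ψ(τ−σ)) p(σ) dσ + p(τ) = v(ψ(τ)) for all τ ∈ [0, φ(1)], then P(z,0) λ(0) + ∫₀^z P(z,ζ) v(ζ)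 dζ = v(z) for all z ∈ [0,1]. -/
/-!
Since `φ' = 1/λ`, both terms of the transport equation are `±p'(φ(z) - φ(ζ)) / λ(ζ)` by the chain
rule. The boundary condition at `ζ = 0` is the Volterra equation at `τ = φ(z)` after the
substitution `σ = φ(z) - φ(ζ)`, under which `ψ(τ - σ) = ζ` and `dζ / λ(ζ) = -dσ`. The change of
variables along the monotone `φ` holds for an arbitrary integrand, so it applies to `v ∘ ψ` as is.
-/

open Set

/-- The transport time `φ(z) = ∫₀^z dζ/λ(ζ)`. -/
noncomputable def transportTime (lam : ℝ → ℝ) (z : ℝ) : ℝ :=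
  ∫ ζ in (0:ℝ)..z, (lam ζ)⁻¹

/-- The kernel ansatz `P(z,ζ) = p(φ(z) - φ(ζ)) / λ(ζ)`. -/
noncomputable def Pker (lam p : ℝ → ℝ) (z ζ : ℝ) : ℝ :=
  p (transportTime lam z - transportTime lam ζ) / lam ζ

open MeasureTheory intervalIntegral

section

variable {lam p ψ v : ℝ → ℝ} {b z ζ d : ℝ}

theorem transportTime_zero (lam : ℝ → ℝ) : transportTime lam 0 = 0 :=
  integral_same

theorem hasDerivWithinAt_transportTime (hc : ContinuousOn lam (Icc 0 b))
    (hpos : ∀ x ∈ Icc 0 b, 0 < lam x) (hz : z ∈ Icc 0 b) :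
    HasDerivWithinAt (transportTime lam) (lam z)⁻¹ (Icc 0 b) z := by
  have hinv : ContinuousOn (fun x => (lam x)⁻¹) (Icc 0 b) :=
    hc.inv₀ fun x hx => (hpos x hx).ne'
  have hint : IntervalIntegrable (fun x => (lam x)⁻¹) volume 0 z :=
    (hinv.mono (Icc_subset_Icc_right hz.2)).intervalIntegrable_of_Icc hz.1
  -- `FTCFilter.nhdsIcc` finds the membership `z ∈ Icc 0 b` through a `Fact` instance.
  have : Fact (z ∈ Icc 0 b) := ⟨hz⟩
  exact integral_hasDerivWithinAt_right hint
    (hinv.stronglyMeasurableAtFilter_nhdsWithin measurableSet_Icc z) (hinv z hz)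

theorem continuousOn_transportTime (hc : ContinuousOn lam (Icc 0 b))
    (hpos : ∀ x ∈ Icc 0 b, 0 < lam x) : ContinuousOn (transportTime lam) (Icc 0 b) :=
  fun _ hx => (hasDerivWithinAt_transportTime hc hpos hx).continuousWithinAt

theorem monotoneOn_transportTime (hc : ContinuousOn lam (Icc 0 b))
    (hpos : ∀ x ∈ Icc 0 b, 0 < lam x) : MonotoneOn (transportTime lam) (Icc 0 b) :=
  monotoneOn_of_hasDerivWithinAt_nonneg (convex_Icc 0 b) (continuousOn_transportTime hc hpos)
    (fun _ hx =>
      (hasDerivWithinAt_transportTime hc hpos (interior_subset hx)).mono interior_subset)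
    fun x hx => (inv_pos.2 (hpos x (interior_subset hx))).le

theorem transportTime_sub_mem_Icc (hc : ContinuousOn lam (Icc 0 b))
    (hpos : ∀ x ∈ Icc 0 b, 0 < lam x) (hζ : 0 ≤ ζ) (hζz : ζ ≤ z) (hz : z ≤ b) :
    transportTime lam z - transportTime lam ζ ∈ Icc 0 (transportTime lam b) := by
  have hmono := monotoneOn_transportTime hc hpos
  have hζ_mem : ζ ∈ Icc 0 b := ⟨hζ, hζz.trans hz⟩
  have hz_mem : z ∈ Icc 0 b := ⟨hζ.trans hζz, hz⟩
  have hb : 0 ≤ b := hz_mem.1.trans hz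
  have hφζ_nonneg : 0 ≤ transportTime lam ζ := by
    simpa only [transportTime_zero] using hmono (left_mem_Icc.2 hb) hζ_mem hζ
  have hφζ_le : transportTime lam ζ ≤ transportTime lam z := hmono hζ_mem hz_mem hζz
  have hφz_le : transportTime lam z ≤ transportTime lam b :=
    hmono hz_mem (right_mem_Icc.2 hb) hz
  constructor <;> linarith

theorem transportTime_mem_Icc (hc : ContinuousOn lam (Icc 0 b))
    (hpos : ∀ x ∈ Icc 0 b, 0 < lam x) (hz : z ∈ Icc 0 b) :
    transportTime lam z ∈ Icc 0 (transportTime lam b) := by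
  simpa only [transportTime_zero, sub_zero] using
    transportTime_sub_mem_Icc hc hpos le_rfl hz.1 hz.2

theorem integral_comp_transportTime_mul_inv (hc : ContinuousOn lam (Icc 0 b))
    (hpos : ∀ x ∈ Icc 0 b, 0 < lam x) (f : ℝ → ℝ) (hz : z ∈ Icc 0 b) :
    ∫ ζ in (0 : ℝ)..z, f (transportTime lam ζ) * (lam ζ)⁻¹ =
      ∫ s in (0 : ℝ)..transportTime lam z, f s := by
  have hcont : ContinuousOn (transportTime lam) (uIcc 0 z) := by
    rw [uIcc_of_le hz.1]
    exact (continuousOn_transportTime hc hpos).mono (Icc_subset_Icc_right hz.2)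
  have hIoo : Ioo (min 0 z) (max 0 z) ⊆ Ioo 0 b := by
    rw [min_eq_left hz.1, max_eq_right hz.1]
    exact Ioo_subset_Ioo_right hz.2
  have hsubst := integral_comp_mul_deriv_of_deriv_nonneg (g := f) hcont
    (fun x hx => (hasDerivWithinAt_transportTime hc hpos
      (Ioo_subset_Icc_self (hIoo hx))).hasDerivAt (Icc_mem_nhds (hIoo hx).1 (hIoo hx).2))
    (fun x hx => (inv_pos.2 (hpos x (Ioo_subset_Icc_self (hIoo hx)))).le)
  simpa only [Function.comp_apply, transportTime_zero] using hsubst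

theorem pker_self (lam p : ℝ → ℝ) (z : ℝ) : Pker lam p z z = p 0 / lam z := by
  rw [Pker, sub_self]

theorem pker_mul_cancel (p : ℝ → ℝ) (z : ℝ) (hζ : lam ζ ≠ 0) :
    Pker lam p z ζ * lam ζ = p (transportTime lam z - transportTime lam ζ) :=
  div_mul_cancel₀ _ hζ

theorem hasDerivWithinAt_pker_left (hc : ContinuousOn lam (Icc 0 b))
    (hpos : ∀ x ∈ Icc 0 b, 0 < lam x) (hζ : 0 ≤ ζ) (hζz : ζ ≤ z) (hz : z ≤ b)
    (hp : HasDerivWithinAt p d (Icc 0 (transportTime lam b))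
      (transportTime lam z - transportTime lam ζ)) :
    HasDerivWithinAt (fun z' => Pker lam p z' ζ) (d * (lam z)⁻¹ / lam ζ) (Icc ζ b) z := by
  have hφ : HasDerivWithinAt (fun z' => transportTime lam z' - transportTime lam ζ)
      (lam z)⁻¹ (Icc ζ b) z :=
    ((hasDerivWithinAt_transportTime hc hpos ⟨hζ.trans hζz, hz⟩).mono
      (Icc_subset_Icc_left hζ)).sub_const _
  exact (hp.comp z hφ fun x hx => transportTime_sub_mem_Icc hc hpos hζ hx.1 hx.2).div_const _

theorem hasDerivWithinAt_pker_mul_right (hc : ContinuousOn lam (Icc 0 b))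
    (hpos : ∀ x ∈ Icc 0 b, 0 < lam x) (hζ : 0 ≤ ζ) (hζz : ζ ≤ z) (hz : z ≤ b)
    (hp : HasDerivWithinAt p d (Icc 0 (transportTime lam b))
      (transportTime lam z - transportTime lam ζ)) :
    HasDerivWithinAt (fun ζ' => Pker lam p z ζ' * lam ζ') (d * -(lam ζ)⁻¹) (Icc 0 z) ζ := by
  have hφ : HasDerivWithinAt (fun ζ' => transportTime lam z - transportTime lam ζ')
      (-(lam ζ)⁻¹) (Icc 0 z) ζ :=
    ((hasDerivWithinAt_transportTime hc hpos ⟨hζ, hζz.trans hz⟩).mono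
      (Icc_subset_Icc_right hz)).const_sub _
  refine (hp.comp ζ hφ fun x hx =>
    transportTime_sub_mem_Icc hc hpos hx.1 hx.2 hz).congr_of_mem (fun x hx => ?_) ⟨hζ, hζz⟩
  exact pker_mul_cancel p z (hpos x ⟨hx.1, hx.2.trans hz⟩).ne'

theorem continuousOn_pker_right (hc : ContinuousOn lam (Icc 0 b))
    (hpos : ∀ x ∈ Icc 0 b, 0 < lam x) (hp : ContinuousOn p (Icc 0 (transportTime lam b)))
    (hz : z ≤ b) : ContinuousOn (Pker lam p z) (Icc 0 z) := by
  have hsub : Icc 0 z ⊆ Icc 0 b := Icc_subset_Icc_right hz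
  refine ContinuousOn.div (hp.comp ?_ ?_) (hc.mono hsub) fun x hx => (hpos x (hsub hx)).ne'
  · exact continuousOn_const.sub ((continuousOn_transportTime hc hpos).mono hsub)
  · exact fun x hx => transportTime_sub_mem_Icc hc hpos hx.1 hx.2 hz

theorem intervalIntegrable_pker_mul (hc : ContinuousOn lam (Icc 0 b))
    (hpos : ∀ x ∈ Icc 0 b, 0 < lam x) (hp : ContinuousOn p (Icc 0 (transportTime lam b)))
    (hv : IntegrableOn v (Icc 0 b)) (hz : z ∈ Icc 0 b) :
    IntervalIntegrable (fun ζ => Pker lam p z ζ * v ζ) volume 0 z := by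
  rw [intervalIntegrable_iff_integrableOn_Icc_of_le hz.1]
  exact (hv.mono_set (Icc_subset_Icc_right hz.2)).continuousOn_mul
    (continuousOn_pker_right hc hpos hp hz.2) isCompact_Icc

theorem integral_pker_mul (hc : ContinuousOn lam (Icc 0 b)) (hpos : ∀ x ∈ Icc 0 b, 0 < lam x)
    (hψ : LeftInvOn ψ (transportTime lam) (Icc 0 b)) (p v : ℝ → ℝ) (hz : z ∈ Icc 0 b) :
    ∫ ζ in (0 : ℝ)..z, Pker lam p z ζ * v ζ =
      ∫ σ in (0 : ℝ)..transportTime lam z, v (ψ (transportTime lam z - σ)) * p σ := by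
  set τ := transportTime lam z with hτ
  calc ∫ ζ in (0 : ℝ)..z, Pker lam p z ζ * v ζ
      = ∫ ζ in (0 : ℝ)..z, v (ψ (transportTime lam ζ)) * p (τ - transportTime lam ζ) *
          (lam ζ)⁻¹ := by
        refine integral_congr fun ζ hζ => ?_
        rw [uIcc_of_le hz.1] at hζ
        simp only [hψ (Icc_subset_Icc_right hz.2 hζ), Pker, hτ]
        ring
    _ = ∫ s in (0 : ℝ)..τ, v (ψ s) * p (τ - s) :=
        integral_comp_transportTime_mul_inv hc hpos (fun s => v (ψ s) * p (τ - s)) hz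
    _ = ∫ σ in (0 : ℝ)..τ, v (ψ (τ - σ)) * p σ := by
        simpa only [sub_sub_cancel, sub_self, sub_zero] using
          (integral_comp_sub_left (fun s => v (ψ s) * p (τ - s)) τ (a := 0) (b := τ)).symm

theorem pker_transport_equation (hc : ContinuousOn lam (Icc 0 b))
    (hpos : ∀ x ∈ Icc 0 b, 0 < lam x)
    (hp : DifferentiableOn ℝ p (Icc 0 (transportTime lam b)))
    (hζ : 0 ≤ ζ) (hζz : ζ ≤ z) (hz : z ≤ b) :
    ∃ Pz PL : ℝ,
      HasDerivWithinAt (fun z' => Pker lam p z' ζ) Pz (Icc ζ b) z ∧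
      HasDerivWithinAt (fun ζ' => Pker lam p z ζ' * lam ζ') PL (Icc 0 z) ζ ∧
      lam z * Pz + PL = 0 := by
  have hd := (hp _ (transportTime_sub_mem_Icc hc hpos hζ hζz hz)).hasDerivWithinAt
  refine ⟨_, _, hasDerivWithinAt_pker_left hc hpos hζ hζz hz hd,
    hasDerivWithinAt_pker_mul_right hc hpos hζ hζz hz hd, ?_⟩
  have hlamz : lam z ≠ 0 := (hpos z ⟨hζ.trans hζz, hz⟩).ne'
  field_simp
  ring

theorem pker_boundary_condition (hc : ContinuousOn lam (Icc 0 b))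
    (hpos : ∀ x ∈ Icc 0 b, 0 < lam x) (hψ : LeftInvOn ψ (transportTime lam) (Icc 0 b))
    (hz : z ∈ Icc 0 b)
    (hV : (∫ σ in (0 : ℝ)..transportTime lam z, v (ψ (transportTime lam z - σ)) * p σ) +
      p (transportTime lam z) = v (ψ (transportTime lam z))) :
    Pker lam p z 0 * lam 0 + (∫ ζ in (0 : ℝ)..z, Pker lam p z ζ * v ζ) = v z := by
  have hlam0 : lam 0 ≠ 0 := (hpos 0 (left_mem_Icc.2 (hz.1.trans hz.2))).ne'
  rw [pker_mul_cancel p z hlam0, transportTime_zero, sub_zero,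
    integral_pker_mul hc hpos hψ p v hz, add_comm, hV, hψ hz]

theorem stmt_14_general (hc : ContinuousOn lam (Icc 0 b)) (hpos : ∀ x ∈ Icc 0 b, 0 < lam x)
    (hψ : LeftInvOn ψ (transportTime lam) (Icc 0 b))
    (hp : DifferentiableOn ℝ p (Icc 0 (transportTime lam b))) :
    (∀ z ζ : ℝ, 0 ≤ ζ → ζ ≤ z → z ≤ b →
      ∃ Pz PL : ℝ,
        HasDerivWithinAt (fun z' => Pker lam p z' ζ) Pz (Icc ζ b) z ∧
        HasDerivWithinAt (fun ζ' => Pker lam p z ζ' * lam ζ') PL (Icc 0 z) ζ ∧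
        lam z * Pz + PL = 0) ∧
    (∀ z ∈ Icc 0 b, Pker lam p z z = p 0 / lam z) ∧
    (∀ v : ℝ → ℝ, IntegrableOn v (Icc 0 b) →
      (∀ τ ∈ Icc 0 (transportTime lam b),
        (∫ σ in (0 : ℝ)..τ, v (ψ (τ - σ)) * p σ) + p τ = v (ψ τ)) →
      ∀ z ∈ Icc 0 b,
        IntervalIntegrable (fun ζ => Pker lam p z ζ * v ζ) volume 0 z ∧
        Pker lam p z 0 * lam 0 + (∫ ζ in (0 : ℝ)..z, Pker lam p z ζ * v ζ) = v z) :=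
  ⟨fun _ _ => pker_transport_equation hc hpos hp, fun z _ => pker_self lam p z, fun _ hv hV _ hz =>
    ⟨intervalIntegrable_pker_mul hc hpos hp.continuousOn hv hz,
      pker_boundary_condition hc hpos hψ hz (hV _ (transportTime_mem_Icc hc hpos hz))⟩⟩

end

/-- The ansatz `P(z,ζ) = p(φ(z)-φ(ζ))/λ(ζ)` solves the scalar
transport kernel equation `λ(z) ∂_z P + ∂_ζ(P λ) = 0` with `P(z,z) = p(0)/λ(z)`,
and if `p` solves the Volterra equation `∫₀^τ v(ψ(τ-σ)) p(σ) dσ + p(τ) = v(ψ(τ))`,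
then `P(z,0) λ(0) + ∫₀^z P(z,ζ) v(ζ) dζ = v(z)` on `[0,1]`. -/
theorem stmt_14 (lam : ℝ → ℝ)
    (hlamc : ContinuousOn lam (Icc 0 1))
    (hlamp : ∀ z ∈ Icc (0:ℝ) 1, 0 < lam z)
    (ψ : ℝ → ℝ) (hψ : ∀ z ∈ Icc (0:ℝ) 1, ψ (transportTime lam z) = z)
    (p dp : ℝ → ℝ)
    (hp : ∀ τ ∈ Icc (0:ℝ) (transportTime lam 1),
      HasDerivWithinAt p (dp τ) (Icc 0 (transportTime lam 1)) τ)
    (hdp : ContinuousOn dp (Icc 0 (transportTime lam 1))) :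
    (∀ z ζ : ℝ, 0 ≤ ζ → ζ < z → z ≤ 1 →
      ∃ Pz PL : ℝ,
        HasDerivWithinAt (fun z' => Pker lam p z' ζ) Pz (Icc ζ 1) z ∧
        HasDerivWithinAt (fun ζ' => Pker lam p z ζ' * lam ζ') PL (Icc 0 z) ζ ∧
        lam z * Pz + PL = 0) ∧
    (∀ z ∈ Icc (0:ℝ) 1, Pker lam p z z = p 0 / lam z) ∧
    (∀ v : ℝ → ℝ, ContinuousOn v (Icc 0 1) →
      (∀ τ ∈ Icc (0:ℝ) (transportTime lam 1),
        (∫ σ in (0:ℝ)..τ, v (ψ (τ - σ)) * p σ) + p τ = v (ψ τ)) →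
      ∀ z ∈ Icc (0:ℝ) 1,
        Pker lam p z 0 * lam 0 + (∫ ζ in (0:ℝ)..z, Pker lam p z ζ * v ζ) = v z) := by
  obtain ⟨htransport, hdiag, hbdry⟩ := stmt_14_general hlamc hlamp hψ
    fun τ hτ => (hp τ hτ).differentiableWithinAt
  exact ⟨fun z ζ hζ hζz => htransport z ζ hζ hζz.le, hdiag,
    fun v hv hV z hz => (hbdry v hv.integrableOn_Icc hV z hz).2⟩
end
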